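/- arXiv:2112.07420 — 7 statements merged into one kernel-verified Lean document; each statement's English description precedes it below -/
import Mathlib

section
/- Let B be a C*-algebra. If F ⊆ B⁺ fills B, then F residually supports B. -/
/- Common definitions for C*-inclusions, ideals, Cuntz subequivalence,
   supporting/filling families and pure infiniteness. -/

namespace KM

variable {B : Type*} [NonUnitalCStarAlgebra B] [PartialOrder B]

/-- `J` is a closed two-sided ideal of the C*-algebra `C` (given as a subset of `B`). -/
def IsIdealIn (C J : Set B) : Prop :=
  J ⊆ C ∧ IsClosed J ∧ (0 : B) ∈ J ∧ (∀ x ∈ J, ∀ y ∈ J, x + y ∈ J) ∧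
    (∀ (c : ℂ), ∀ x ∈ J, c • x ∈ J) ∧ (∀ x ∈ J, ∀ c ∈ C, c * x ∈ J ∧ x * c ∈ J)

/-- `J` is a closed two-sided ideal of `B`. -/
def IsIdeal (J : Set B) : Prop := IsIdealIn Set.univ J

/-- `A` is a C*-subalgebra of `B`: a closed `*`-subalgebra. -/
def IsSubCStar (A : Set B) : Prop :=
  IsClosed A ∧ (0 : B) ∈ A ∧ (∀ x ∈ A, ∀ y ∈ A, x + y ∈ A) ∧
    (∀ (c : ℂ), ∀ x ∈ A, c • x ∈ A) ∧ (∀ x ∈ A, ∀ y ∈ A, x * y ∈ A) ∧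
    (∀ x ∈ A, star x ∈ A)

/-- The smallest closed two-sided ideal of the C*-algebra `C` containing `S`. -/
def idealGenIn (C S : Set B) : Set B := ⋂₀ {J : Set B | IsIdealIn C J ∧ S ⊆ J}

/-- The smallest closed two-sided ideal of `B` containing `S`; for an ideal `I` of a
subalgebra `A` this is the induced ideal `BIB`. -/
def idealGen (S : Set B) : Set B := idealGenIn Set.univ S

/-- `I` is a restricted ideal of the subalgebra `A`, i.e. `I = J ∩ A` for an ideal `J` of `B`. -/
def IsRestricted (A I : Set B) : Prop := ∃ J : Set B, IsIdeal J ∧ I = J ∩ A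

/-- `J` is an induced ideal of `B`: `J = BIB` for some ideal `I` of `A`. -/
def IsInduced (A J : Set B) : Prop := ∃ I : Set B, IsIdealIn A I ∧ J = idealGen I

/-- `A` separates ideals in `B`. -/
def SeparatesIdeals (A : Set B) : Prop :=
  ∀ J₁ J₂ : Set B, IsIdeal J₁ → IsIdeal J₂ → J₁ ∩ A = J₂ ∩ A → J₁ = J₂

/-- Cuntz subequivalence `a ≼ b`. -/
def CuntzBelow (a b : B) : Prop :=
  ∀ ε : ℝ, 0 < ε → ∃ x : B, ‖a - star x * b * x‖ < ε

/-- `F` supports `B`. -/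
def Supports (F : Set B) : Prop :=
  ∀ b : B, 0 ≤ b → b ≠ 0 → ∃ a ∈ F, a ≠ 0 ∧ CuntzBelow a b

/-- `F` residually supports the C*-algebra `C ⊆ B`: for every ideal `J` of `C`, the image
of `F` in `C/J` supports `C/J`, phrased concretely via the distance to `J`. -/
def ResiduallySupportsIn (C F : Set B) : Prop :=
  ∀ J : Set B, IsIdealIn C J → ∀ b ∈ C, 0 ≤ b → b ∉ J →
    ∃ a ∈ F, a ∉ J ∧ ∀ ε : ℝ, 0 < ε → ∃ x ∈ C,
      Metric.infDist (a - star x * b * x) J < ε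

/-- `F` residually supports `B`. -/
def ResiduallySupports (F : Set B) : Prop := ResiduallySupportsIn Set.univ F

/-- `x` lies in `aB = {a c : c ∈ B}`. -/
def MemRightMul (a x : B) : Prop := ∃ c : B, x = a * c

/-- `a` is properly infinite in `B`. -/
def ProperlyInfinite (a : B) : Prop :=
  ∀ ε : ℝ, 0 < ε → ∃ x y : B, MemRightMul a x ∧ MemRightMul a y ∧
    ‖star x * x - a‖ ≤ ε ∧ ‖star y * y - a‖ ≤ ε ∧ ‖star x * y‖ ≤ ε

/-- `a` is infinite in `B`. -/
def InfiniteElt (a : B) : Prop :=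
  ∃ b : B, 0 ≤ b ∧ b ≠ 0 ∧ ∀ ε : ℝ, 0 < ε → ∃ x y : B,
    MemRightMul a x ∧ MemRightMul a y ∧
    ‖star x * x - a‖ ≤ ε ∧ ‖star y * y - b‖ ≤ ε ∧ ‖star x * y‖ ≤ ε

/-- The pair `a, b` is separated in `B`. -/
def SeparatedPair (a b : B) : Prop :=
  ∀ ε : ℝ, 0 < ε → ∃ x y : B, MemRightMul a x ∧ MemRightMul b y ∧
    ‖star x * x - a‖ ≤ ε ∧ ‖star y * y - b‖ ≤ ε ∧ ‖star x * y‖ ≤ ε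

/-- A character of `B`: a nonzero multiplicative linear functional `B → ℂ`. -/
def IsCharacter (φ : B →ₗ[ℂ] ℂ) : Prop :=
  (∀ x y : B, φ (x * y) = φ x * φ y) ∧ φ ≠ 0

/-- `B` is purely infinite: it admits no characters and for nonzero positive `a, b`,
`a ≼ b` iff `a` lies in the ideal generated by `b`. -/
def PurelyInfinite (B : Type*) [NonUnitalCStarAlgebra B] [PartialOrder B] : Prop :=
  (¬ ∃ φ : B →ₗ[ℂ] ℂ, IsCharacter φ) ∧
    ∀ a b : B, 0 ≤ a → a ≠ 0 → 0 ≤ b → b ≠ 0 → (CuntzBelow a b ↔ a ∈ idealGen {b})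

/-- `p` is a projection. -/
def IsProjection (p : B) : Prop := star p = p ∧ p * p = p

/-- `B` has the ideal property: projections separate ideals. -/
def IdealProperty (B : Type*) [NonUnitalCStarAlgebra B] [PartialOrder B] : Prop :=
  ∀ J₁ J₂ : Set B, IsIdeal J₁ → IsIdeal J₂ →
    (∀ p : B, IsProjection p → (p ∈ J₁ ↔ p ∈ J₂)) → J₁ = J₂

/-- `B` is strongly purely infinite: every pair of positive elements is separated. -/
def StronglyPurelyInfinite (B : Type*) [NonUnitalCStarAlgebra B] [PartialOrder B] : Prop :=
  ∀ a b : B, 0 ≤ a → 0 ≤ b → SeparatedPair a b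

/-- `D` is a hereditary C*-subalgebra of `B`. -/
def IsHereditary (D : Set B) : Prop :=
  IsSubCStar D ∧ ∀ b d : B, d ∈ D → 0 ≤ b → b ≤ d → b ∈ D

/-- `F` fills `B`. -/
def Fills (F : Set B) : Prop :=
  ∀ D : Set B, IsHereditary D → (∃ d ∈ D, d ≠ 0) →
    ∀ J : Set B, IsIdeal J → ¬ D ⊆ J →
      ∃ z : B, z ∉ J ∧ z * star z ∈ D ∧ star z * z ∈ F

/-- Closed linear span of a subset of `B`. -/
def closSpan (S : Set B) : Set B := closure ↑(Submodule.span ℂ S)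

/-- The C*-inclusion `A ⊆ B` is symmetric. -/
def SymmetricInclusion (A : Set B) : Prop :=
  ∀ I : Set B, IsRestricted A I →
    closSpan {z : B | ∃ x ∈ I, ∃ b : B, z = x * b} =
      closSpan {z : B | ∃ b : B, ∃ x ∈ I, z = b * x}

/-- `b` is a normaliser of `A` in `B`. -/
def IsNormalizer (A : Set B) (b : B) : Prop :=
  (∀ a ∈ A, b * a * star b ∈ A) ∧ (∀ a ∈ A, star b * a * b ∈ A)

/-- The inclusion `A ⊆ B` is nondegenerate: the closed span of `A·B` is `B`. -/
def Nondegenerate (A : Set B) : Prop :=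
  closSpan {z : B | ∃ a ∈ A, ∃ b : B, z = a * b} = Set.univ

/-- The inclusion `A ⊆ B` is regular: nondegenerate and `B` is the closed linear span of
the normalisers of `A`. -/
def RegularInclusion (A : Set B) : Prop :=
  Nondegenerate A ∧ closSpan {b : B | IsNormalizer A b} = Set.univ

end KM

open KM

variable {B : Type*} [NonUnitalCStarAlgebra B] [PartialOrder B] [StarOrderedRing B]

/-!
In a C*-algebra, `z * star z ≤ d` forces `z` into the closed right ideal generated by `d`: after
adjoining a unit, `‖z - d (d + ε)⁻¹ z‖ ^ 2 = ‖ε ^ 2 (d + ε)⁻¹ z z* (d + ε)⁻¹‖ ≤ ε`. Hence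
`R ∩ R*` is hereditary for every closed right ideal `R`. Apply the filling hypothesis to
the hereditary subalgebra coming from `R = closure (b B)`. The resulting `z` lies in `R`, because
`z z*` does; and `z* z ∉ J`, since otherwise `z ∈ J` by the same principle. Approximating `z` by
elements `b y` gives `z* z ≈ (√b y)* b (√b y)`, so that `z* z ≼ b` holds in `B` itself.
-/

namespace KM

section Unital

variable {A : Type*} [CStarAlgebra A] [PartialOrder A] [StarOrderedRing A]

lemma norm_units_inv_le_of_algebraMap_le {u : Aˣ} {ε : ℝ} (hε : 0 < ε) (hu : algebraMap ℝ A ε ≤ u) :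
    ‖(↑u⁻¹ : A)‖ ≤ ε⁻¹ := by
  let e : Aˣ := Units.map (algebraMap ℝ A).toMonoidHom (Units.mk0 ε hε.ne')
  have he : 0 ≤ (e : A) := algebraMap_nonneg A hε.le
  have hu₀ : 0 ≤ (↑u⁻¹ : A) := CFC.inv_nonneg_of_nonneg u (he.trans hu)
  rw [CStarAlgebra.norm_le_iff_le_algebraMap _ (inv_nonneg.2 hε.le) hu₀]
  exact CStarAlgebra.inv_le_inv he hu

lemma norm_sub_mul_units_inv_mul_sq_le {z d : A} {u : Aˣ} {ε : ℝ} (hz : z * star z ≤ d)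
    (hε : 0 < ε) (hu : (u : A) = d + algebraMap ℝ A ε) :
    ‖z - d * (↑u⁻¹ * z)‖ ^ 2 ≤ ε := by
  have hd : 0 ≤ d := (mul_star_self_nonneg z).trans hz
  have hεA : 0 ≤ algebraMap ℝ A ε := algebraMap_nonneg A hε.le
  have hzu : z * star z ≤ u := hz.trans (hu ▸ le_add_of_nonneg_right hεA)
  have hεu : algebraMap ℝ A ε ≤ u := hu ▸ le_add_of_nonneg_left hd
  have hu₀ : 0 ≤ (↑u⁻¹ : A) := CFC.inv_nonneg_of_nonneg u (hεA.trans hεu)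
  have hus : star (↑u⁻¹ : A) = ↑u⁻¹ := (IsSelfAdjoint.of_nonneg hu₀).star_eq
  have hsub : z - d * (↑u⁻¹ * z) = ε • (↑u⁻¹ * z) := by
    rw [eq_sub_of_add_eq hu.symm, sub_mul, Units.mul_inv_cancel_left, sub_sub_cancel,
      Algebra.smul_def]
  have hconj : ↑u⁻¹ * z * star (↑u⁻¹ * z) ≤ ↑u⁻¹ :=
    calc ↑u⁻¹ * z * star (↑u⁻¹ * z) = ↑u⁻¹ * (z * star z) * star ↑u⁻¹ := by
          simp only [star_mul, mul_assoc]
      _ ≤ ↑u⁻¹ * u * star ↑u⁻¹ := star_right_conjugate_le_conjugate hzu _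
      _ = ↑u⁻¹ := by rw [Units.inv_mul, one_mul, hus]
  calc ‖z - d * (↑u⁻¹ * z)‖ ^ 2 = ε ^ 2 * ‖↑u⁻¹ * z * star (↑u⁻¹ * z)‖ := by
        rw [hsub, norm_smul, mul_pow, Real.norm_eq_abs, sq_abs, CStarRing.norm_self_mul_star,
          sq ‖_‖]
    _ ≤ ε ^ 2 * ε⁻¹ := by
        gcongr
        exact (CStarAlgebra.norm_le_norm_of_nonneg_of_le (mul_star_self_nonneg _) hconj).trans
          (norm_units_inv_le_of_algebraMap_le hε hεu)
    _ = ε := by field_simp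

-- The factor `z` in the approximants keeps them in `B` when `A` is the unitization of `B`.
lemma mem_closure_range_mul_mul_of_mul_star_le {z d : A} (hz : z * star z ≤ d) :
    z ∈ closure (Set.range fun v => d * (v * z)) := by
  rw [Metric.mem_closure_range_iff]
  intro ε hε
  have hd : 0 ≤ d := (mul_star_self_nonneg z).trans hz
  have hδ : 0 < ε ^ 2 / 2 := by positivity
  have hpos : IsStrictlyPositive (d + algebraMap ℝ A (ε ^ 2 / 2)) :=
    .nonneg_add hd (isStrictlyPositive_algebraMap hδ)
  obtain ⟨u, hu⟩ := hpos.isUnit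
  refine ⟨↑u⁻¹, ?_⟩
  rw [dist_eq_norm]
  refine lt_of_pow_lt_pow_left₀ 2 hε.le ?_
  exact (norm_sub_mul_units_inv_mul_sq_le hz hδ hu).trans_lt (half_lt_self (by positivity))

end Unital

open scoped CStarAlgebra in
theorem mem_closure_range_mul_left_of_mul_star_le {z d : B} (hz : z * star z ≤ d) :
    z ∈ closure (Set.range fun y => d * y) := by
  have hz' : (z : Unitization ℂ B) * star (z : Unitization ℂ B) ≤ d := by
    rw [← Unitization.inr_star, ← Unitization.inr_mul, Unitization.inr_le_iff _ _ (.mul_star_self z)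
      (.of_nonneg ((mul_star_self_nonneg z).trans hz))]
    exact hz
  rw [(Unitization.isometry_inr (𝕜 := ℂ)).isEmbedding.closure_eq_preimage_closure_image]
  refine closure_mono ?_ (mem_closure_range_mul_mul_of_mul_star_le hz')
  rintro _ ⟨v, rfl⟩
  have hv : ((v * (z : Unitization ℂ B)).snd : Unitization ℂ B) = v * z := by ext <;> simp
  exact ⟨_, ⟨(v * (z : Unitization ℂ B)).snd, rfl⟩, by rw [Unitization.inr_mul, hv]⟩

theorem self_mem_closure_range_mul_left (b : B) : b ∈ closure (Set.range fun y => b * y) := by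
  have hsub : (Set.range fun y => b * star b * y) ⊆ Set.range fun y => b * y := by
    rintro _ ⟨y, rfl⟩
    exact ⟨star b * y, (mul_assoc _ _ _).symm⟩
  exact closure_mono hsub (mem_closure_range_mul_left_of_mul_star_le le_rfl)

/-- A closed right ideal of a complex topological algebra, encoded as a subset like `IsIdeal`.
Its intersection with its adjoint is a hereditary subalgebra. -/
structure IsClosedRightIdeal {A : Type*} [NonUnitalRing A] [Module ℂ A] [TopologicalSpace A]
    (R : Set A) : Prop where
  isClosed : IsClosed R
  zero_mem : 0 ∈ R
  add_mem : ∀ {x y}, x ∈ R → y ∈ R → x + y ∈ R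
  smul_mem : ∀ (c : ℂ) {x}, x ∈ R → c • x ∈ R
  mul_mem_right : ∀ {x} (y), x ∈ R → x * y ∈ R

theorem isClosedRightIdeal_closure_range_mul_left {A : Type*} [NonUnitalRing A] [Module ℂ A]
    [SMulCommClass ℂ A A] [TopologicalSpace A] [IsTopologicalSemiring A]
    [ContinuousConstSMul ℂ A] (b : A) :
    IsClosedRightIdeal (closure (Set.range fun y => b * y)) where
  isClosed := isClosed_closure
  zero_mem := subset_closure ⟨0, mul_zero b⟩
  add_mem hx hy := by
    refine map_mem_closure₂ continuous_add hx hy ?_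
    rintro _ ⟨v, rfl⟩ _ ⟨w, rfl⟩
    exact ⟨v + w, mul_add b v w⟩
  smul_mem c _ hx := by
    refine map_mem_closure (continuous_const_smul c) hx ?_
    rintro _ ⟨v, rfl⟩
    exact ⟨c • v, mul_smul_comm c b v⟩
  mul_mem_right y hx := by
    refine map_mem_closure (f := (· * y)) (continuous_mul_const y) hx ?_
    rintro _ ⟨v, rfl⟩
    exact ⟨v * y, (mul_assoc b v y).symm⟩

theorem IsIdeal.isClosedRightIdeal {A : Type*} [NonUnitalCStarAlgebra A] {J : Set A}
    (hJ : IsIdeal J) : IsClosedRightIdeal J := by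
  obtain ⟨-, hclosed, hzero, hadd, hsmul, hmul⟩ := hJ
  exact ⟨hclosed, hzero, fun hx hy => hadd _ hx _ hy, fun c _ hx => hsmul c _ hx,
    fun y hx => (hmul _ hx y trivial).2⟩

theorem IsIdeal.mul_mem_left {A : Type*} [NonUnitalCStarAlgebra A] {J : Set A}
    (hJ : IsIdeal J) (y : A) {x : A} (hx : x ∈ J) : y * x ∈ J :=
  (hJ.2.2.2.2.2 x hx y trivial).1

theorem IsClosedRightIdeal.mem_of_mul_star_le {R : Set B} (hR : IsClosedRightIdeal R) {z d : B}
    (hd : d ∈ R) (hz : z * star z ≤ d) : z ∈ R :=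
  closure_minimal (Set.range_subset_iff.2 fun y => hR.mul_mem_right y hd) hR.isClosed
    (mem_closure_range_mul_left_of_mul_star_le hz)

theorem IsClosedRightIdeal.mem_of_nonneg_of_le {R : Set B} (hR : IsClosedRightIdeal R) {x d : B}
    (hd : d ∈ R) (hx : 0 ≤ x) (hxd : x ≤ d) : x ∈ R := by
  obtain ⟨s, rfl⟩ := CStarAlgebra.nonneg_iff_eq_mul_star_self.1 hx
  exact hR.mul_mem_right (star s) (hR.mem_of_mul_star_le hd hxd)

theorem IsClosedRightIdeal.isHereditary_inter_star_preimage {R : Set B}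
    (hR : IsClosedRightIdeal R) : IsHereditary (R ∩ star ⁻¹' R) := by
  refine ⟨⟨hR.isClosed.inter (hR.isClosed.preimage continuous_star), ?_, ?_, ?_, ?_, ?_⟩, ?_⟩
  · exact ⟨hR.zero_mem, by simpa only [Set.mem_preimage, star_zero] using hR.zero_mem⟩
  · rintro x ⟨hx, hx'⟩ y ⟨hy, hy'⟩
    exact ⟨hR.add_mem hx hy, by simpa only [Set.mem_preimage, star_add] using hR.add_mem hx' hy'⟩
  · rintro c x ⟨hx, hx'⟩
    exact ⟨hR.smul_mem c hx, by
      simpa only [Set.mem_preimage, star_smul] using hR.smul_mem (star c) hx'⟩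
  · rintro x ⟨hx, -⟩ y ⟨-, hy'⟩
    exact ⟨hR.mul_mem_right y hx, by
      simpa only [Set.mem_preimage, star_mul] using hR.mul_mem_right (star x) hy'⟩
  · rintro x ⟨hx, hx'⟩
    exact ⟨hx', by simpa only [Set.mem_preimage, star_star] using hx⟩
  · rintro x d ⟨hd, -⟩ hx hxd
    have hxR : x ∈ R := hR.mem_of_nonneg_of_le hd hx hxd
    exact ⟨hxR, by rwa [Set.mem_preimage, (IsSelfAdjoint.of_nonneg hx).star_eq]⟩

theorem IsIdeal.mem_of_star_mul_self_mem {J : Set B} (hJ : IsIdeal J) {z : B}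
    (hz : star z * z ∈ J) : z ∈ J := by
  have hstar : star z ∈ J := hJ.isClosedRightIdeal.mem_of_mul_star_le hz (by rw [star_star])
  exact hJ.isClosedRightIdeal.mem_of_mul_star_le (hJ.mul_mem_left z hstar) le_rfl

theorem cuntzBelow_star_mul_self_of_mem_closure_range {b z : B} (hb : 0 ≤ b)
    (hz : z ∈ closure (Set.range fun y => b * y)) : CuntzBelow (star z * z) b := by
  intro ε hε
  have hopen : IsOpen {x : B | ‖star z * z - star x * x‖ < ε} :=
    isOpen_lt (by fun_prop) continuous_const
  obtain ⟨_, hy, y, rfl⟩ := mem_closure_iff.1 hz _ hopen (by simpa using hε)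
  obtain ⟨s, hs, rfl⟩ := CStarAlgebra.nonneg_iff_exists_isSelfAdjoint_and_eq_mul_self.1 hb
  have hconj : star (s * y) * (s * s) * (s * y) = star (s * s * y) * (s * s * y) := by
    simp only [star_mul, hs.star_eq, mul_assoc]
  exact ⟨s * y, by rwa [hconj]⟩

theorem Fills.exists_notMem_cuntzBelow {F J : Set B} (hF : Fills F) (hJ : IsIdeal J) {b : B}
    (hb : 0 ≤ b) (hbJ : b ∉ J) : ∃ a ∈ F, a ∉ J ∧ CuntzBelow a b := by
  have hR := isClosedRightIdeal_closure_range_mul_left b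
  set R : Set B := closure (Set.range fun y => b * y)
  have hbR : b ∈ R := self_mem_closure_range_mul_left b
  have hbD : b ∈ R ∩ star ⁻¹' R :=
    ⟨hbR, by rwa [Set.mem_preimage, (IsSelfAdjoint.of_nonneg hb).star_eq]⟩
  have hb₀ : b ≠ 0 := (ne_of_mem_of_not_mem hJ.isClosedRightIdeal.zero_mem hbJ).symm
  obtain ⟨z, hzJ, ⟨hzR, -⟩, hzF⟩ := hF _ hR.isHereditary_inter_star_preimage ⟨b, hbD, hb₀⟩ J hJ
    fun hDJ => hbJ (hDJ hbD)
  exact ⟨star z * z, hzF, fun hz => hzJ (hJ.mem_of_star_mul_self_mem hz),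
    cuntzBelow_star_mul_self_of_mem_closure_range hb (hR.mem_of_mul_star_le hzR le_rfl)⟩

end KM

/-- If `F ⊆ B⁺` fills `B`, then it residually supports `B`. -/
theorem stmt9 (F : Set B) (hF : ∀ a ∈ F, 0 ≤ a) (hfill : Fills F) :
    ResiduallySupports F := by
  intro J (hJ : IsIdeal J) b _ hb hbJ
  obtain ⟨a, haF, haJ, hab⟩ := hfill.exists_notMem_cuntzBelow hJ hb hbJ
  refine ⟨a, haF, haJ, fun ε hε => ?_⟩
  obtain ⟨x, hx⟩ := hab ε hε
  have hdist : Metric.infDist (a - star x * b * x) J ≤ ‖a - star x * b * x‖ := by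
    simpa only [dist_zero_right] using
      Metric.infDist_le_dist_of_mem hJ.isClosedRightIdeal.zero_mem
  exact ⟨x, trivial, hdist.trans_lt hx⟩
end

section
/- Let Ω be a locally compact Hausdorff space, let B = C₀(Ω) be the C*-algebra of continuous complex-valued functions on Ω vanishing at infinity, and let F ⊆ B⁺ be a set of nonnegative functions in B. The following are equivalent: (1) F fills B; (2) F residually supports B; (3) the open supports {ω ∈ Ω : a(ω) > 0}, for a ∈ F, form a basis for the topology of Ω. -/
open KM
open scoped ZeroAtInfty ComplexOrder

variable {Ω : Type*} [TopologicalSpace Ω] [LocallyCompactSpace Ω] [T2Space Ω]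

/-- The canonical (pointwise) partial order on `C₀(Ω, ℂ)`; it coincides with the
C*-algebraic order on `C₀(Ω, ℂ)`. -/
noncomputable instance : PartialOrder C₀(Ω, ℂ) where
  le f g := ∀ ω : Ω, f ω ≤ g ω
  le_refl f ω := le_refl _
  le_trans f g h hfg hgh ω := le_trans (hfg ω) (hgh ω)
  le_antisymm f g hfg hgf := DFunLike.ext f g fun ω => le_antisymm (hfg ω) (hgf ω)

/-!
A closed ideal of `C₀(X)` is determined by the open set where its elements do not all vanish. If
`F` fills or residually supports `C₀(X)`, then for `x ∈ U` open, comparing the ideals of functions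
supported in `U` and in `U \ {x}` produces an element of `F` that is supported in `U` and does not
vanish at `x`. Conversely, if `d ∉ J`, then `d` is nonzero at some point `x` where `J` vanishes,
and a basis provides `a ∈ F` with `a x ≠ 0` on whose support `‖d‖` is bounded below by some
`c > 0`. This bound gives `a ≤ (‖a‖ / c²) d* d`, which settles hereditary subalgebras containing
`d`, and, for `d ≥ 0`, lets one divide: `a = z* d z` with `z = √(a / max d c)`.
-/

namespace KM

open Filter Function Set Topology TopologicalSpace

section IsIdeal

variable {B : Type*} [NonUnitalCStarAlgebra B] {I J : Set B}

theorem IsIdeal.isClosed (hI : IsIdeal I) : IsClosed I :=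
  hI.2.1

theorem IsIdeal.zero_mem (hI : IsIdeal I) : 0 ∈ I :=
  hI.2.2.1

theorem IsIdeal.add_mem (hI : IsIdeal I) {a b : B} (ha : a ∈ I) (hb : b ∈ I) : a + b ∈ I :=
  hI.2.2.2.1 a ha b hb

theorem IsIdeal.smul_mem (hI : IsIdeal I) (c : ℂ) {a : B} (ha : a ∈ I) : c • a ∈ I :=
  hI.2.2.2.2.1 c a ha

theorem IsIdeal.mul_mem_left_s10 (hI : IsIdeal I) (b : B) {a : B} (ha : a ∈ I) : b * a ∈ I :=
  (hI.2.2.2.2.2 a ha b trivial).1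

theorem IsIdeal.mul_mem_right (hI : IsIdeal I) (b : B) {a : B} (ha : a ∈ I) : a * b ∈ I :=
  (hI.2.2.2.2.2 a ha b trivial).2

theorem IsIdeal.mem_of_forall_infDist_lt (hI : IsIdeal I) (hJ : J.Nonempty) (hJI : J ⊆ I)
    {a b : B} (hb : b ∈ I)
    (hab : ∀ ε : ℝ, 0 < ε → ∃ x : B, Metric.infDist (a - star x * b * x) J < ε) : a ∈ I := by
  rw [← hI.isClosed.closure_eq, Metric.mem_closure_iff]
  intro ε hε
  obtain ⟨x, hx⟩ := hab ε hε
  obtain ⟨j, hj, hdist⟩ := (Metric.infDist_lt_iff hJ).1 hx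
  have hxbx : star x * b * x ∈ I := hI.mul_mem_right x (hI.mul_mem_left_s10 (star x) hb)
  refine ⟨star x * b * x + j, hI.add_mem hxbx (hJI hj), ?_⟩
  rwa [dist_eq_norm, ← sub_sub, ← dist_eq_norm]

end IsIdeal

section ZeroAtInfty

variable {X E : Type*} [TopologicalSpace X] [NormedAddCommGroup E]

theorem isCompact_setOfPred_le_norm (f : C₀(X, E)) {ε : ℝ} (hε : 0 < ε) :
    IsCompact {x | ε ≤ ‖f x‖} := by
  have hlim : Tendsto (fun x => ‖f x‖) (cocompact X) (𝓝 0) := by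
    simpa only [norm_zero] using (zero_at_infty f).norm
  obtain ⟨K, hK, hsub⟩ := mem_cocompact'.1 (hlim.eventually_lt_const hε)
  exact hK.of_isClosed_subset (isClosed_le continuous_const (map_continuous f).norm)
    fun x hx => hsub (not_lt.2 hx : ¬‖f x‖ < ε)

theorem norm_apply_le_norm (f : C₀(X, E)) (x : X) : ‖f x‖ ≤ ‖f‖ :=
  f.toBCF.norm_coe_le_norm x

theorem norm_le_of_forall_norm_apply_le {f : C₀(X, E)} {C : ℝ} (hC : 0 ≤ C)
    (h : ∀ x, ‖f x‖ ≤ C) : ‖f‖ ≤ C :=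
  (BoundedContinuousFunction.norm_le (f := f.toBCF) hC).2 h

theorem continuous_eval (x : X) : Continuous fun f : C₀(X, E) => f x :=
  (continuous_eval_const (F := BoundedContinuousFunction X E) x).comp
    ZeroAtInftyContinuousMap.isometry_toBCF.continuous

theorem exists_apply_eq_inv_max_norm_smul {G : Type*} [SeminormedAddCommGroup G] [NormedSpace ℝ E]
    (f : C₀(X, E)) {h : X → G} (hh : Continuous h) {δ : ℝ} (hδ : 0 < δ) :
    ∃ w : C₀(X, E), ∀ x, w x = (max ‖h x‖ δ)⁻¹ • f x := by
  have hpos (x : X) : 0 < max ‖h x‖ δ := lt_max_of_lt_right hδ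
  have hcont : Continuous fun x => (max ‖h x‖ δ)⁻¹ :=
    (hh.norm.max continuous_const).inv₀ fun x => (hpos x).ne'
  have hbdd : IsBoundedUnder (· ≤ ·) (cocompact X) (norm ∘ fun x => (max ‖h x‖ δ)⁻¹) :=
    isBoundedUnder_of ⟨δ⁻¹, fun x => by
      rw [comp_apply, norm_inv, Real.norm_of_nonneg (hpos x).le]
      exact inv_anti₀ hδ (le_max_right _ _)⟩
  exact ⟨⟨⟨_, hcont.smul (map_continuous f)⟩, hbdd.smul_tendsto_zero (zero_at_infty f)⟩,
    fun _ => rfl⟩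

theorem exists_norm_sub_mul_le (f h : C₀(X, ℂ)) {ε : ℝ} (hε : 0 < ε)
    (hfh : {x | ε ≤ ‖f x‖} ⊆ support h) : ∃ w : C₀(X, ℂ), ‖f - w * h‖ ≤ ε := by
  obtain ⟨δ, hδ, hδh⟩ := (isCompact_setOfPred_le_norm f hε).exists_forall_le'
    (map_continuous (star h * h)).norm.continuousOn fun x hx =>
      norm_pos_iff.2 (mul_ne_zero (star_ne_zero.2 (hfh hx)) (hfh hx))
  obtain ⟨w, hw⟩ := exists_apply_eq_inv_max_norm_smul (f * star h)
    (map_continuous (star h * h)) hδ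
  refine ⟨w, norm_le_of_forall_norm_apply_le hε.le fun x => ?_⟩
  set s := ‖(star h * h) x‖ with hs
  have hstar : star (h x) * h x = (s : ℂ) := by
    simpa [hs, sq] using Complex.conj_mul' (h x)
  have hdiff : (f - w * h) x = (1 - (max s δ)⁻¹ * s) • f x := calc
    (f - w * h) x = f x - (max s δ)⁻¹ • (f x * (star (h x) * h x)) := by
      rw [← mul_assoc, ← smul_mul_assoc, ZeroAtInftyContinuousMap.sub_apply,
        ZeroAtInftyContinuousMap.mul_apply, hw]
      rfl
    _ = (1 - (max s δ)⁻¹ * s) • f x := by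
      rw [hstar, Complex.real_smul, Complex.real_smul]
      push_cast
      ring
  have hle_one : (max s δ)⁻¹ * s ≤ 1 := inv_mul_le_one_of_le₀ (le_max_left _ _) (by positivity)
  rw [hdiff, norm_smul, Real.norm_of_nonneg (sub_nonneg.2 hle_one)]
  rcases le_or_gt ε ‖f x‖ with hx | hx
  · rw [max_eq_left (hδh x hx), inv_mul_cancel₀ (hδ.trans_le (hδh x hx)).ne', sub_self, zero_mul]
    exact hε.le
  · exact (mul_le_of_le_one_left (norm_nonneg _) (sub_le_self _ (by positivity))).trans hx.le

theorem exists_star_mul_self_eq {a : C₀(X, ℂ)} (ha : 0 ≤ a) : ∃ z, star z * z = a := by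
  have ha' (x : X) : 0 ≤ a x := ha x
  have hlim : Tendsto (fun x => (√(a x).re : ℂ)) (cocompact X) (𝓝 0) := by
    have hcont : Continuous fun t : ℂ => (√t.re : ℂ) := by fun_prop
    simpa [comp_def] using (hcont.tendsto 0).comp (zero_at_infty a)
  refine ⟨⟨⟨fun x => (√(a x).re : ℂ), by fun_prop⟩, hlim⟩, ?_⟩
  ext x
  change star (√(a x).re : ℂ) * (√(a x).re : ℂ) = a x
  rw [Complex.star_def, Complex.conj_ofReal, ← Complex.ofReal_mul,
    Real.mul_self_sqrt (Complex.nonneg_iff.1 (ha' x)).1]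
  exact (Complex.eq_re_of_ofReal_le (ha' x)).symm

theorem exists_nonneg_apply_ne_zero_support_subset [LocallyCompactSpace X] [R1Space X] {U : Set X}
    (hU : IsOpen U) {x : X} (hx : x ∈ U) :
    ∃ b : C₀(X, ℂ), 0 ≤ b ∧ b x ≠ 0 ∧ support b ⊆ U := by
  obtain ⟨f, hf_one, hf_zero, hf_compact, hf_mem⟩ := exists_continuous_one_zero_of_isCompact
    isCompact_singleton hU.isClosed_compl
    (disjoint_compl_right_iff_subset.2 (singleton_subset_iff.2 hx))
  have hcompact : HasCompactSupport fun y => (f y : ℂ) :=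
    hf_compact.comp_left (g := Complex.ofReal) Complex.ofReal_zero
  refine ⟨⟨⟨fun y => (f y : ℂ), by fun_prop⟩, hcompact.is_zero_at_infty⟩, fun y => ?_, ?_,
    fun y hy => ?_⟩
  · exact Complex.zero_le_real.2 (hf_mem y).1
  · exact Complex.ofReal_ne_zero.2 (by simp [hf_one (mem_singleton x)])
  · by_contra hyU
    exact hy (Complex.ofReal_eq_zero.2 (hf_zero hyU))

end ZeroAtInfty

section Ideals

variable {X : Type*} [TopologicalSpace X]

/-- The ideal of functions in `C₀(X)` vanishing outside `U`, the analogue for `C₀(X)` of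
`ContinuousMap.idealOfSet`. The set `U` need not be open. -/
def idealOfSet (U : Set X) : Set C₀(X, ℂ) := {f | support f ⊆ U}

/-- The points at which some element of `J` does not vanish, i.e. the complement of the hull of `J`;
a closed ideal is recovered from this open set. -/
def setOfIdeal (J : Set C₀(X, ℂ)) : Set X := ⋃ f ∈ J, support f

theorem isIdeal_idealOfSet (U : Set X) : IsIdeal (idealOfSet U) := by
  refine ⟨subset_univ _, ?_, ?_, fun f hf g hg => ?_, fun c f hf => ?_, fun f hf g _ => ⟨?_, ?_⟩⟩
  · have hInter : idealOfSet U = ⋂ x ∈ Uᶜ, {f : C₀(X, ℂ) | f x = 0} := by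
      ext f
      simp only [idealOfSet, support_subset_iff', mem_ofPred_eq, mem_iInter, mem_compl_iff]
    rw [hInter]
    exact isClosed_biInter fun x _ => isClosed_singleton.preimage (continuous_eval x)
  · simp [idealOfSet]
  · exact (support_add f g).trans (union_subset hf hg)
  · exact (support_const_smul_subset c f).trans hf
  · exact (support_mul_subset_right g f).trans hf
  · exact (support_mul_subset_left f g).trans hf

theorem isHereditary_idealOfSet (U : Set X) : IsHereditary (idealOfSet U) := by
  have hU := isIdeal_idealOfSet U
  refine ⟨⟨hU.isClosed, hU.zero_mem, fun _ hf _ => hU.add_mem hf, fun c _ => hU.smul_mem c,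
    fun f _ _ => hU.mul_mem_left_s10 f, fun f hf => ?_⟩, fun b d hd hb hbd x hx => hd fun hdx => ?_⟩
  · exact fun x hx => hf (star_ne_zero.1 hx)
  · exact hx (le_antisymm ((hbd x).trans_eq hdx) (hb x))

theorem IsIdeal.exists_nonneg_subset_support {J : Set C₀(X, ℂ)} (hJ : IsIdeal J)
    {K : Set X} (hK : IsCompact K) (hKJ : K ⊆ setOfIdeal J) :
    ∃ h ∈ J, 0 ≤ h ∧ K ⊆ support h := by
  refine hK.induction_on (p := fun s => ∃ h ∈ J, 0 ≤ h ∧ s ⊆ support h)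
    ⟨0, hJ.zero_mem, le_rfl, empty_subset _⟩ ?mono ?union ?nhds
  case mono =>
    rintro s t hst ⟨h, hhJ, hh, hth⟩
    exact ⟨h, hhJ, hh, hst.trans hth⟩
  case union =>
    rintro s t ⟨g, hgJ, hg, hsg⟩ ⟨h, hhJ, hh, hth⟩
    refine ⟨g + h, hJ.add_mem hgJ hhJ, fun x => add_nonneg (hg x) (hh x), fun x hx hgh => ?_⟩
    obtain ⟨hgx, hhx⟩ := (add_eq_zero_iff_of_nonneg (hg x) (hh x)).1 hgh
    exact hx.elim (fun hxs => hsg hxs hgx) fun hxt => hth hxt hhx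
  case nhds =>
    intro x hx
    obtain ⟨j, hjJ, hjx⟩ := mem_iUnion₂.1 (hKJ hx)
    refine ⟨support j, mem_nhdsWithin_of_mem_nhds ((map_continuous j).isOpen_support.mem_nhds hjx),
      star j * j, hJ.mul_mem_left_s10 _ hjJ, fun y => star_mul_self_nonneg (j y), fun y hy => ?_⟩
    exact mul_ne_zero (star_ne_zero.2 hy) hy

theorem IsIdeal.idealOfSet_setOfIdeal {J : Set C₀(X, ℂ)} (hJ : IsIdeal J) :
    idealOfSet (setOfIdeal J) = J := by
  refine Subset.antisymm (fun d hd => ?_) fun d hd =>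
    subset_biUnion_of_mem (u := fun f : C₀(X, ℂ) => support f) hd
  rw [← hJ.isClosed.closure_eq]
  refine Metric.mem_closure_iff.2 fun ε hε => ?_
  have hsub : {x | ε / 2 ≤ ‖d x‖} ⊆ setOfIdeal J := fun x hx =>
    hd (norm_pos_iff.1 ((half_pos hε).trans_le hx))
  obtain ⟨h, hhJ, -, hsupp⟩ := hJ.exists_nonneg_subset_support
    (isCompact_setOfPred_le_norm d (half_pos hε)) hsub
  obtain ⟨w, hw⟩ := exists_norm_sub_mul_le d h (half_pos hε) hsupp
  exact ⟨w * h, hJ.mul_mem_left_s10 w hhJ,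
    (dist_eq_norm d _).trans_lt (hw.trans_lt (half_lt_self hε))⟩

end Ideals

section Basis

variable {X : Type*} [TopologicalSpace X] {F : Set C₀(X, ℂ)}

theorem setOfPred_pos_eq_support {a : C₀(X, ℂ)} (ha : 0 ≤ a) : {x | 0 < a x} = support a :=
  ext fun x => (ha x).lt_iff_ne'

theorem Fills.exists_support_subset [LocallyCompactSpace X] [R1Space X] (hF : Fills F)
    {U : Set X} (hU : IsOpen U) {x : X} (hx : x ∈ U) :
    ∃ a ∈ F, x ∈ support a ∧ support a ⊆ U := by
  obtain ⟨b, -, hbx, hbU⟩ := exists_nonneg_apply_ne_zero_support_subset hU hx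
  obtain ⟨z, hzJ, hzU, hzF⟩ := hF (idealOfSet U) (isHereditary_idealOfSet U)
    ⟨b, hbU, fun hb => hbx (hb ▸ rfl)⟩ (idealOfSet (U \ {x})) (isIdeal_idealOfSet _)
    fun hsub => (hsub hbU hbx).2 rfl
  have hsupp : support (star z * z) = support z := by
    ext y
    simp
  rw [mul_comm, idealOfSet, mem_ofPred_eq, hsupp] at hzU
  refine ⟨star z * z, hzF, ?_, hsupp.trans_subset hzU⟩
  rw [hsupp]
  by_contra hzx
  exact hzJ (subset_sdiff_singleton hzU hzx)

theorem ResiduallySupports.exists_support_subset [LocallyCompactSpace X] [R1Space X]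
    (hF : ResiduallySupports F) {U : Set X} (hU : IsOpen U) {x : X} (hx : x ∈ U) :
    ∃ a ∈ F, x ∈ support a ∧ support a ⊆ U := by
  obtain ⟨b, hb, hbx, hbU⟩ := exists_nonneg_apply_ne_zero_support_subset hU hx
  have hJ : IsIdeal (idealOfSet (U \ {x})) := isIdeal_idealOfSet _
  obtain ⟨a, haF, haJ, hab⟩ := hF _ hJ b trivial hb fun hbJ => (hbJ hbx).2 rfl
  have haU : a ∈ idealOfSet U := (isIdeal_idealOfSet U).mem_of_forall_infDist_lt ⟨0, hJ.zero_mem⟩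
    (fun f hf => hf.trans sdiff_subset) hbU fun ε hε => (hab ε hε).imp fun _ => And.right
  refine ⟨a, haF, ?_, haU⟩
  by_contra hax
  exact haJ (subset_sdiff_singleton haU hax)

theorem isTopologicalBasis_support
    (hF : ∀ U : Set X, IsOpen U → ∀ x ∈ U, ∃ a ∈ F, x ∈ support a ∧ support a ⊆ U) :
    IsTopologicalBasis ((fun a : C₀(X, ℂ) => support a) '' F) := by
  refine isTopologicalBasis_of_isOpen_of_nhds ?_ fun x U hx hU => ?_
  · rintro _ ⟨a, -, rfl⟩
    exact (map_continuous a).isOpen_support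
  · obtain ⟨a, haF, hxa, haU⟩ := hF U hU x hx
    exact ⟨support a, mem_image_of_mem _ haF, hxa, haU⟩

theorem exists_notMem_le_norm_on_support
    (hB : IsTopologicalBasis ((fun a : C₀(X, ℂ) => support a) '' F)) {J : Set C₀(X, ℂ)}
    (hJ : IsIdeal J) {d : C₀(X, ℂ)} (hd : d ∉ J) :
    ∃ a ∈ F, a ∉ J ∧ ∃ c : ℝ, 0 < c ∧ ∀ x ∈ support a, c ≤ ‖d x‖ := by
  rw [← hJ.idealOfSet_setOfIdeal] at hd
  obtain ⟨x, hdx, hxJ⟩ := not_subset.1 hd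
  have hlt : ‖d x‖ / 2 < ‖d x‖ := half_lt_self (norm_pos_iff.2 hdx)
  obtain ⟨_, ⟨a, haF, rfl⟩, hax, hsub⟩ := hB.exists_subset_of_mem_open
    (u := {y | ‖d x‖ / 2 < ‖d y‖}) hlt (isOpen_lt continuous_const (map_continuous d).norm)
  exact ⟨a, haF, fun haJ => hxJ (mem_biUnion haJ hax), ‖d x‖ / 2, half_pos (norm_pos_iff.2 hdx),
    fun y hy => (hsub hy).le⟩

theorem IsHereditary.mem_of_le_norm_on_support {D : Set C₀(X, ℂ)} (hD : IsHereditary D)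
    {a d : C₀(X, ℂ)} (hd : d ∈ D) (ha : 0 ≤ a) {c : ℝ} (hc : 0 < c)
    (hac : ∀ x ∈ support a, c ≤ ‖d x‖) : a ∈ D := by
  obtain ⟨⟨-, -, -, hsmul, hmul, hstar⟩, hher⟩ := hD
  have ha' (x : X) : a x = (‖a x‖ : ℂ) := (RCLike.norm_of_nonneg' (ha x)).symm
  have hdd (x : X) : (((‖a‖ / c ^ 2 : ℝ) : ℂ) • (star d * d)) x =
      (‖a‖ / c ^ 2 * ‖d x‖ ^ 2 : ℝ) := by
    simp [Complex.conj_mul']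
  refine hher a _ (hsmul (‖a‖ / c ^ 2 : ℝ) _ (hmul _ (hstar d hd) d hd)) ha fun x => ?_
  rw [hdd, ha', Complex.real_le_real]
  by_cases hx : a x = 0
  · rw [hx, norm_zero]
    positivity
  · calc ‖a x‖ ≤ ‖a‖ := norm_apply_le_norm a x
      _ = ‖a‖ / c ^ 2 * c ^ 2 := by field_simp
      _ ≤ ‖a‖ / c ^ 2 * ‖d x‖ ^ 2 := by gcongr; exact hac x hx

theorem exists_star_mul_mul_eq {a b : C₀(X, ℂ)} (ha : 0 ≤ a) (hb : 0 ≤ b) {c : ℝ} (hc : 0 < c)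
    (hab : ∀ x ∈ support a, c ≤ ‖b x‖) : ∃ z, star z * b * z = a := by
  obtain ⟨w, hw⟩ := exists_apply_eq_inv_max_norm_smul a (map_continuous b) hc
  have hw_nonneg : 0 ≤ w := fun x => by
    rw [hw]
    exact smul_nonneg (by positivity) (ha x)
  obtain ⟨z, hz⟩ := exists_star_mul_self_eq hw_nonneg
  refine ⟨z, ?_⟩
  rw [mul_right_comm, hz]
  ext x
  rw [ZeroAtInftyContinuousMap.mul_apply, hw]
  by_cases hx : a x = 0
  · rw [hx, smul_zero, zero_mul]
  · have hbx : b x ≠ 0 := norm_pos_iff.1 (hc.trans_le (hab x hx))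
    rw [max_eq_left (hab x hx), Complex.real_smul, Complex.ofReal_inv,
      show (‖b x‖ : ℂ) = b x from RCLike.norm_of_nonneg' (hb x), mul_right_comm,
      inv_mul_cancel₀ hbx, one_mul]

theorem fills_of_isTopologicalBasis (hF : ∀ a ∈ F, 0 ≤ a)
    (hB : IsTopologicalBasis ((fun a : C₀(X, ℂ) => support a) '' F)) : Fills F := by
  intro D hD _ J hJ hDJ
  obtain ⟨d, hdD, hdJ⟩ := not_subset.1 hDJ
  obtain ⟨a, haF, haJ, c, hc, hac⟩ := exists_notMem_le_norm_on_support hB hJ hdJ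
  obtain ⟨z, rfl⟩ := exists_star_mul_self_eq (hF a haF)
  refine ⟨z, fun hzJ => haJ (hJ.mul_mem_left_s10 _ hzJ), ?_, haF⟩
  rw [mul_comm]
  exact hD.mem_of_le_norm_on_support hdD (hF _ haF) hc hac

theorem residuallySupports_of_isTopologicalBasis (hF : ∀ a ∈ F, 0 ≤ a)
    (hB : IsTopologicalBasis ((fun a : C₀(X, ℂ) => support a) '' F)) : ResiduallySupports F := by
  intro J (hJ : IsIdeal J) b _ hb hbJ
  obtain ⟨a, haF, haJ, c, hc, hac⟩ := exists_notMem_le_norm_on_support hB hJ hbJ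
  obtain ⟨z, hz⟩ := exists_star_mul_mul_eq (hF a haF) hb hc hac
  refine ⟨a, haF, haJ, fun ε hε => ⟨z, trivial, ?_⟩⟩
  rwa [hz, sub_self, Metric.infDist_zero_of_mem hJ.zero_mem]

end Basis

end KM

theorem stmt10_general {X : Type*} [TopologicalSpace X] [LocallyCompactSpace X] [R1Space X]
    (F : Set C₀(X, ℂ)) (hF : ∀ a ∈ F, 0 ≤ a) :
    List.TFAE [Fills F, ResiduallySupports F,
      TopologicalSpace.IsTopologicalBasis
        ((fun a : C₀(X, ℂ) => {x : X | 0 < a x}) '' F)] := by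
  rw [Set.image_congr fun a ha => setOfPred_pos_eq_support (hF a ha)]
  tfae_have 1 → 3 := fun h => isTopologicalBasis_support fun _ hU _ => h.exists_support_subset hU
  tfae_have 2 → 3 := fun h => isTopologicalBasis_support fun _ hU _ => h.exists_support_subset hU
  tfae_have 3 → 1 := fills_of_isTopologicalBasis hF
  tfae_have 3 → 2 := residuallySupports_of_isTopologicalBasis hF
  tfae_finish

/-- For `B = C₀(Ω)` and a set `F` of nonnegative functions in `B`, the following are
equivalent: `F` fills `B`; `F` residually supports `B`; the open supports of the elements
of `F` form a basis for the topology of `Ω`. -/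
theorem stmt10 (F : Set C₀(Ω, ℂ)) (hF : ∀ a ∈ F, 0 ≤ a) :
    List.TFAE [Fills F, ResiduallySupports F,
      TopologicalSpace.IsTopologicalBasis
        ((fun a : C₀(Ω, ℂ) => {ω : Ω | 0 < a ω}) '' F)] :=
  stmt10_general F hF
end

section
/- Let A ⊆ B be a symmetric C*-inclusion and let E : B → A be a bounded linear map with E(a) = a for all a ∈ A and E(a b c) = a E(b) c for all a, c ∈ A and b ∈ B (these properties hold in particular for any conditional expectation). Then for every restricted ideal I of A one has E(BIB) ⊆ I, hence E(BIB) = I; consequently E descends to a well-defined map B/BIB → A/I sending b + BIB to E(b) + I. -/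
open KM

variable {B : Type*} [NonUnitalCStarAlgebra B] [PartialOrder B] [StarOrderedRing B]

/-! For `x` in a closed ideal `I` of a C*-subalgebra, an approximate unit of the C*-algebra
generated by `x x* ∈ I` is a left approximate unit for `x`, so `x b ≈ u (x b)` with `u ∈ I`.
Symmetry places `x b` in the closed span of `BI`; hence the induced ideal `BIB` is the closed span
of the products `u b v` with `u, v ∈ I`. The bimodule property gives `E(u b v) = u E(b) v ∈ I`, and
continuity of `E` carries this over to `BIB`. -/

namespace KM

open Set Filter
open scoped Pointwise Topology

theorem elemental_le_of_isSelfAdjoint {R A : Type*} [CommSemiring R] [StarRing R]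
    [NonUnitalSemiring A] [StarRing A] [Module R A] [IsScalarTower R A A] [SMulCommClass R A A]
    [StarModule R A] [TopologicalSpace A] [IsSemitopologicalSemiring A] [ContinuousConstSMul R A]
    [ContinuousStar A] {a : A} (ha : IsSelfAdjoint a) {S : NonUnitalSubalgebra R A}
    (hS : IsClosed (S : Set A)) (haS : a ∈ S) :
    (NonUnitalStarAlgebra.elemental R a).toNonUnitalSubalgebra ≤ S := by
  have adjoin_le : (NonUnitalStarAlgebra.adjoin R {a}).toNonUnitalSubalgebra ≤ S := by
    rw [NonUnitalStarAlgebra.adjoin_toNonUnitalSubalgebra, star_singleton, ha.star_eq, union_self]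
    exact NonUnitalAlgebra.adjoin_le (singleton_subset_iff.2 haS)
  exact closure_minimal adjoin_le hS

theorem norm_mul_sub_self_sq_le {A : Type*} [NonUnitalNormedRing A] [StarRing A] [CStarRing A]
    {u : A} (hu : ‖u‖ ≤ 1) (x : A) :
    ‖u * x - x‖ ^ 2 ≤ 2 * ‖u * (x * star x) - x * star x‖ := by
  set d := u * (x * star x) - x * star x with hd
  have expand : (u * x - x) * star (u * x - x) = d * star u - d := by
    simp only [hd, star_sub, star_mul, mul_sub, sub_mul, mul_assoc]
  calc ‖u * x - x‖ ^ 2 = ‖d * star u - d‖ := by rw [sq, ← CStarRing.norm_self_mul_star, expand]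
    _ ≤ ‖d‖ * ‖star u‖ + ‖d‖ := (norm_sub_le _ _).trans (by gcongr; exact norm_mul_le _ _)
    _ ≤ ‖d‖ * 1 + ‖d‖ := by rw [norm_star]; gcongr
    _ = 2 * ‖d‖ := by ring

theorem mem_closure_mul_singleton_of_mul_star_mem {A : Type*} [NonUnitalCStarAlgebra A]
    {S : NonUnitalSubalgebra ℂ A} (hS : IsClosed (S : Set A)) {x : A} (hx : x * star x ∈ S) :
    x ∈ closure ((S : Set A) * {x}) := by
  let D := NonUnitalStarAlgebra.elemental ℂ (x * star x)
  let t : D := ⟨x * star x, NonUnitalStarAlgebra.elemental.self_mem ℂ _⟩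
  let : PartialOrder D := CStarAlgebra.spectralOrder D
  have : StarOrderedRing D := CStarAlgebra.spectralOrderedRing D
  have unit := CStarAlgebra.increasingApproximateUnit D
  have := unit.neBot
  have tendsto_defect :
      Tendsto (fun u : D ↦ 2 * ‖u * t - t‖) (CStarAlgebra.approximateUnit D) (𝓝 0) := by
    simpa using (tendsto_iff_norm_sub_tendsto_zero.1 (unit.tendsto_mul_right t)).const_mul 2
  have tendsto_sq :
      Tendsto (fun u : D ↦ ‖(u : A) * x - x‖ ^ 2) (CStarAlgebra.approximateUnit D) (𝓝 0) :=
    squeeze_zero' (.of_forall fun _ ↦ by positivity)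
      (unit.eventually_norm.mono fun u hu ↦ norm_mul_sub_self_sq_le (u := (u : A)) hu x)
      tendsto_defect
  have tendsto_mul : Tendsto (fun u : D ↦ (u : A) * x) (CStarAlgebra.approximateUnit D) (𝓝 x) :=
    tendsto_iff_norm_sub_tendsto_zero.2 <| by
      simpa only [Real.sqrt_sq (norm_nonneg _), Real.sqrt_zero] using tendsto_sq.sqrt
  exact mem_closure_of_tendsto tendsto_mul <| .of_forall fun u ↦
    mul_mem_mul (elemental_le_of_isSelfAdjoint (.mul_star_self x) hS hx u.2) rfl

variable {B : Type*} [NonUnitalCStarAlgebra B] {A C I S : Set B}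

theorem subset_closSpan : S ⊆ closSpan S :=
  Submodule.subset_span.trans subset_closure

theorem isClosed_closSpan : IsClosed (closSpan S) :=
  isClosed_closure

theorem mapsTo_closSpan {F : Type*} [AddCommMonoid F] [Module ℂ F] [TopologicalSpace F]
    (f : B →L[ℂ] F) {p : Submodule ℂ F} (hp : IsClosed (p : Set F)) (h : MapsTo f S p) :
    MapsTo f (closSpan S) p :=
  Submodule.topologicalClosure_minimal _ (t := p.comap f.toLinearMap) (Submodule.span_le.2 h)
    (hp.preimage f.continuous)

theorem mapsTo_closSpan_closSpan {D : Type*} [NonUnitalCStarAlgebra D] (f : B →L[ℂ] D)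
    {T : Set D} (h : MapsTo f S (closSpan T)) : MapsTo f (closSpan S) (closSpan T) :=
  mapsTo_closSpan f (p := (Submodule.span ℂ T).topologicalClosure) isClosed_closSpan h

theorem mul_mem_closSpan_mul_univ {z : B} (hz : z ∈ closSpan (I * univ)) (c : B) :
    z * c ∈ closSpan (I * univ) := by
  refine mapsTo_closSpan_closSpan ((ContinuousLinearMap.mul ℂ B).flip c) ?_ hz
  rintro _ ⟨x, hx, b, -, rfl⟩
  exact subset_closSpan ⟨x, hx, b * c, mem_univ _, (mul_assoc x b c).symm⟩

theorem mul_mem_closSpan_univ_mul {z : B} (hz : z ∈ closSpan (univ * I)) (c : B) :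
    c * z ∈ closSpan (univ * I) := by
  refine mapsTo_closSpan_closSpan (ContinuousLinearMap.mul ℂ B c) ?_ hz
  rintro _ ⟨b, -, x, hx, rfl⟩
  exact subset_closSpan ⟨c * b, mem_univ _, x, hx, mul_assoc c b x⟩

theorem mul_mem_closSpan_mul_univ_mul {z : B} (hz : z ∈ closSpan (univ * I)) {u : B} (hu : u ∈ I) :
    u * z ∈ closSpan (I * univ * I) := by
  refine mapsTo_closSpan_closSpan (ContinuousLinearMap.mul ℂ B u) ?_ hz
  rintro _ ⟨b, -, x, hx, rfl⟩
  exact subset_closSpan ⟨u * b, mul_mem_mul hu (mem_univ b), x, hx, mul_assoc u b x⟩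

theorem isIdeal_closSpan_mul_univ (hsym : closSpan (I * univ) = closSpan (univ * I)) :
    IsIdeal (closSpan (I * univ)) := by
  let K := (Submodule.span ℂ (I * univ)).topologicalClosure
  refine ⟨subset_univ _, isClosed_closSpan, K.zero_mem, fun _ hx _ hy ↦ K.add_mem hx hy,
    fun c _ hx ↦ K.smul_mem c hx, fun x hx c _ ↦ ⟨?_, mul_mem_closSpan_mul_univ hx c⟩⟩
  rw [hsym] at hx ⊢
  exact mul_mem_closSpan_univ_mul hx c

theorem closSpan_mul_univ_subset (hunit : ∀ x ∈ I, x ∈ closure (I * {x}))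
    (hsym : closSpan (I * univ) = closSpan (univ * I)) :
    closSpan (I * univ) ⊆ closSpan (I * univ * I) := by
  refine mapsTo_closSpan_closSpan (.id ℂ B) ?_
  rintro _ ⟨x, hx, b, -, rfl⟩
  have approx : x * b ∈ closure (closSpan (I * univ * I)) := by
    refine map_mem_closure (f := (· * b)) (continuous_mul_const b) (hunit x hx) ?_
    rintro _ ⟨u, hu, x, rfl, rfl⟩
    have hxb : x * b ∈ closSpan (univ * I) :=
      hsym ▸ subset_closSpan (mul_mem_mul hx (mem_univ b))
    simpa only [mul_assoc] using mul_mem_closSpan_mul_univ_mul hxb hu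
  rwa [isClosed_closSpan.closure_eq] at approx

theorem subset_idealGen : I ⊆ idealGen I :=
  subset_sInter fun _ hJ ↦ hJ.2

theorem idealGen_subset_closSpan_mul_univ_mul (hunit : ∀ x ∈ I, x ∈ closure (I * {x}))
    (hsym : closSpan (I * univ) = closSpan (univ * I)) :
    idealGen I ⊆ closSpan (I * univ * I) := by
  refine Subset.trans (sInter_subset_of_mem ⟨isIdeal_closSpan_mul_univ hsym, fun x hx ↦ ?_⟩)
    (closSpan_mul_univ_subset hunit hsym)
  have approx := closure_mono (mul_subset_mul_left (subset_univ {x})) (hunit x hx)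
  exact closure_minimal subset_closSpan isClosed_closSpan approx

/-- A closed ideal of a C*-subalgebra, as a non-unital subalgebra of the ambient C*-algebra. -/
def IsIdealIn.toNonUnitalSubalgebra (hI : IsIdealIn C I) : NonUnitalSubalgebra ℂ B where
  carrier := I
  zero_mem' := hI.2.2.1
  add_mem' hx hy := hI.2.2.2.1 _ hx _ hy
  smul_mem' c x hx := hI.2.2.2.2.1 c x hx
  mul_mem' hx hy := (hI.2.2.2.2.2 _ hx _ (hI.1 hy)).2

theorem IsIdealIn.mem_closure_mul_singleton (hC : IsSubCStar C) (hI : IsIdealIn C I) {x : B}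
    (hx : x ∈ I) : x ∈ closure (I * {x}) := by
  have ⟨hIC, hIclosed, _, _, _, hImul⟩ := hI
  have ⟨_, _, _, _, _, hCstar⟩ := hC
  exact mem_closure_mul_singleton_of_mul_star_mem (S := hI.toNonUnitalSubalgebra) hIclosed
    (hImul x hx _ (hCstar x (hIC hx))).2

theorem IsRestricted.isIdealIn (hA : IsSubCStar A) (hI : IsRestricted A I) : IsIdealIn A I := by
  obtain ⟨J, ⟨-, hJclosed, hJzero, hJadd, hJsmul, hJmul⟩, rfl⟩ := hI
  obtain ⟨hAclosed, hAzero, hAadd, hAsmul, hAmul, -⟩ := hA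
  exact ⟨inter_subset_right, hJclosed.inter hAclosed, ⟨hJzero, hAzero⟩,
    fun x hx y hy ↦ ⟨hJadd x hx.1 y hy.1, hAadd x hx.2 y hy.2⟩,
    fun c x hx ↦ ⟨hJsmul c x hx.1, hAsmul c x hx.2⟩,
    fun x hx a ha ↦ ⟨⟨(hJmul x hx.1 a trivial).1, hAmul a ha x hx.2⟩,
      ⟨(hJmul x hx.1 a trivial).2, hAmul x hx.2 a ha⟩⟩⟩

theorem SymmetricInclusion.closSpan_mul_univ_eq (hA : SymmetricInclusion A)
    (hI : IsRestricted A I) : closSpan (I * univ) = closSpan (univ * I) := by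
  have left_products : {z : B | ∃ x ∈ I, ∃ b : B, z = x * b} = I * univ := by
    ext z; simp [Set.mem_mul, eq_comm]
  have right_products : {z : B | ∃ b : B, ∃ x ∈ I, z = b * x} = univ * I := by
    ext z; simp [Set.mem_mul, eq_comm]
  simpa only [left_products, right_products] using hA I hI

theorem IsIdealIn.map_mem_of_mem_closSpan (hI : IsIdealIn A I) (E : B →L[ℂ] B)
    (hEmem : ∀ b : B, E b ∈ A)
    (hEbimod : ∀ a ∈ A, ∀ c ∈ A, ∀ b : B, E (a * b * c) = a * E b * c) {z : B}
    (hz : z ∈ closSpan (I * univ * I)) : E z ∈ I := by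
  have ⟨hIA, hIclosed, _, _, _, hImul⟩ := hI
  refine mapsTo_closSpan E (p := hI.toNonUnitalSubalgebra.toSubmodule) hIclosed ?_ hz
  rintro _ ⟨_, ⟨u, hu, b, -, rfl⟩, v, hv, rfl⟩
  have mem : u * E b * v ∈ I := (hImul _ (hImul u hu _ (hEmem b)).2 v (hIA hv)).2
  rw [← hEbimod u (hIA hu) v (hIA hv)] at mem
  exact mem

end KM

open scoped Pointwise in
theorem stmt11_general {B : Type*} [NonUnitalCStarAlgebra B] {A I : Set B}
    (hA : IsSubCStar A) (hI : IsIdealIn A I)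
    (hsym : closSpan (I * Set.univ) = closSpan (Set.univ * I)) (E : B →L[ℂ] B)
    (hEmem : ∀ b : B, E b ∈ A) (hEid : ∀ a ∈ A, E a = a)
    (hEbimod : ∀ a ∈ A, ∀ c ∈ A, ∀ b : B, E (a * b * c) = a * E b * c) :
    (∀ b ∈ idealGen I, E b ∈ I) ∧ E '' idealGen I = I ∧
      ∀ b b' : B, b - b' ∈ idealGen I → E b - E b' ∈ I := by
  have hunit : ∀ x ∈ I, x ∈ closure (I * {x}) := fun _ hx ↦ hI.mem_closure_mul_singleton hA hx
  have map_mem : ∀ b ∈ idealGen I, E b ∈ I := fun _ hb ↦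
    hI.map_mem_of_mem_closSpan E hEmem hEbimod <|
      idealGen_subset_closSpan_mul_univ_mul hunit hsym hb
  refine ⟨map_mem, Set.Subset.antisymm (Set.image_subset_iff.2 map_mem) fun x hx ↦ ?_,
    fun b b' h ↦ ?_⟩
  · exact ⟨x, subset_idealGen hx, hEid x (hI.1 hx)⟩
  · simpa only [map_sub] using map_mem _ h

/-- For a symmetric C*-inclusion `A ⊆ B` and a bounded linear map `E : B → A` restricting
to the identity on `A` and satisfying the `A`-bimodule property, for every restricted
ideal `I` one has `E(BIB) ⊆ I`, hence `E(BIB) = I`, and `E` descends to a well-defined map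
`B/BIB → A/I`. -/
theorem stmt11 (A : Set B) (hA : IsSubCStar A) (hsym : SymmetricInclusion A)
    (E : B →L[ℂ] B)
    (hEmem : ∀ b : B, E b ∈ A)
    (hEid : ∀ a ∈ A, E a = a)
    (hEbimod : ∀ a ∈ A, ∀ c ∈ A, ∀ b : B, E (a * b * c) = a * E b * c) :
    ∀ I : Set B, IsRestricted A I →
      (∀ b ∈ idealGen I, E b ∈ I) ∧ ((⇑E) '' idealGen I = I) ∧
        ∀ b b' : B, b - b' ∈ idealGen I → E b - E b' ∈ I := by
  intro I hI
  exact stmt11_general hA (hI.isIdealIn hA) (hsym.closSpan_mul_univ_eq hI) E hEmem hEid hEbimod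
end

section
/- Every regular C*-inclusion A ⊆ B is symmetric: for every restricted ideal I of A, the closed linear span of {x b : x ∈ I, b ∈ B} equals the closed linear span of {b x : b ∈ B, x ∈ I}. -/
open KM

variable {B : Type*} [NonUnitalCStarAlgebra B] [PartialOrder B] [StarOrderedRing B]

/-
In a C*-algebra every `z` is a limit of elements `c * (star z * z)`, so a closed left ideal
containing `star z * z` contains `z`. If `x` lies in a restricted ideal `I` and `n` normalises `A`,
then `z = x * n` satisfies `star z * z = star n * (star x * x) * n ∈ I`, so `x * n` lies in the
closed span of `B I`; as the normalisers span a dense subspace, `I B` lies there too. The reverse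
inclusion is the mirror image.
-/

namespace KM

variable {E F : Type*} [NonUnitalCStarAlgebra E] [NonUnitalCStarAlgebra F]

theorem star_mul_self_sub_mul_cfcₙ (z : E) {f : ℝ → ℝ}
    (hf : ContinuousOn f (quasispectrum ℝ (star z * z))) (hf0 : f 0 = 0) :
    star (z - z * cfcₙ f (star z * z)) * (z - z * cfcₙ f (star z * z)) =
      cfcₙ (fun t ↦ t * (1 - f t) ^ 2) (star z * z) := by
  set h := star z * z with hh
  have hsa : IsSelfAdjoint h := .star_mul_self z
  have he : star (cfcₙ f h) = cfcₙ f h := (cfcₙ_predicate f h).star_eq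
  have hp : cfcₙ (fun t ↦ t - t * f t) h = h - h * cfcₙ f h := by
    rw [cfcₙ_sub (fun t ↦ t) (fun t ↦ t * f t) h, cfcₙ_mul (fun t ↦ t) f h, cfcₙ_id' ℝ h]
  calc star (z - z * cfcₙ f h) * (z - z * cfcₙ f h)
      = (h - h * cfcₙ f h) - cfcₙ f h * (h - h * cfcₙ f h) := by
        rw [star_sub, star_mul, he, hh]
        noncomm_ring
    _ = cfcₙ (fun t ↦ (t - t * f t) - f t * (t - t * f t)) h := by
        rw [cfcₙ_sub (fun t ↦ t - t * f t) (fun t ↦ f t * (t - t * f t)) h,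
          cfcₙ_mul f (fun t ↦ t - t * f t) h, hp]
    _ = cfcₙ (fun t ↦ t * (1 - f t) ^ 2) h := by
        congr 1
        ext t
        ring

theorem abs_mul_one_sub_div_mul_sq_le {η : ℝ} (hη : 0 < η) (t : ℝ) :
    |t * (1 - t / (t ^ 2 + η ^ 2) * t) ^ 2| ≤ η := by
  have hden : 0 < t ^ 2 + η ^ 2 := by positivity
  have hmul : |t| * η ≤ t ^ 2 + η ^ 2 := by nlinarith [sq_nonneg (|t| - η), sq_abs t]
  have hsq : η ^ 2 ≤ t ^ 2 + η ^ 2 := le_add_of_nonneg_left (sq_nonneg t)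
  have hsub : 1 - t / (t ^ 2 + η ^ 2) * t = η ^ 2 / (t ^ 2 + η ^ 2) := by
    field_simp
    ring
  rw [hsub, abs_mul, abs_sq, div_pow, ← mul_div_assoc, div_le_iff₀ (by positivity)]
  calc |t| * (η ^ 2) ^ 2 = η * ((|t| * η) * η ^ 2) := by ring
    _ ≤ η * ((t ^ 2 + η ^ 2) * (t ^ 2 + η ^ 2)) := by gcongr
    _ = η * (t ^ 2 + η ^ 2) ^ 2 := by ring

theorem mem_closure_range_mul_star_mul_self (z : E) :
    z ∈ closure (Set.range fun c ↦ c * (star z * z)) := by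
  refine Metric.mem_closure_iff.2 fun ε hε ↦ ?_
  obtain ⟨η, hη, hηε⟩ := exists_between (pow_pos hε 2)
  -- An approximation of `1 / t` that vanishes at `0`, as the nonunital calculus requires.
  let k : ℝ → ℝ := fun t ↦ t / (t ^ 2 + η ^ 2)
  have hk : Continuous k := by
    refine Continuous.div (by fun_prop) (by fun_prop) fun t ↦ ?_
    positivity
  have hkt : cfcₙ (fun t ↦ k t * t) (star z * z) = cfcₙ k (star z * z) * (star z * z) := by
    rw [cfcₙ_mul k (fun t ↦ t) _ hk.continuousOn (zero_div _), cfcₙ_id' ℝ (star z * z)]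
  refine ⟨z * cfcₙ k (star z * z) * (star z * z), ⟨_, rfl⟩, lt_of_pow_lt_pow_left₀ 2 hε.le ?_⟩
  rw [dist_eq_norm, mul_assoc, ← hkt, sq, ← CStarRing.norm_star_mul_self,
    star_mul_self_sub_mul_cfcₙ z (f := fun t ↦ k t * t) (by fun_prop) (mul_zero _)]
  exact (norm_cfcₙ_le fun t _ ↦ abs_mul_one_sub_div_mul_sq_le hη t).trans_lt hηε

theorem mem_closure_range_mul_star_self_mul (z : E) :
    z ∈ closure (Set.range fun c ↦ z * star z * c) := by
  have hstar := map_mem_closure continuous_star (mem_closure_range_mul_star_mul_self (star z))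
    (t := Set.range fun c ↦ z * star z * c)
    (by rintro _ ⟨c, rfl⟩; exact ⟨star c, by simp⟩)
  rwa [star_star] at hstar

theorem mapsTo_closSpan_s13 (f : E →L[ℂ] F) {S : Set E} {T : Set F}
    (hf : Set.MapsTo f S (closSpan T)) : Set.MapsTo f (closSpan S) (closSpan T) :=
  let M := (Submodule.span ℂ T).topologicalClosure.comap (f : E →ₗ[ℂ] F)
  Submodule.topologicalClosure_minimal (t := M) _ (Submodule.span_le.2 hf)
    (isClosed_closure.preimage f.continuous)

theorem closSpan_subset_closSpan {S T : Set E} (h : S ⊆ closSpan T) : closSpan S ⊆ closSpan T :=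
  mapsTo_closSpan_s13 (.id ℂ E) h

theorem mem_closSpan_mul_of_star_mul_self_mem {I : Set E} {z : E} (hz : star z * z ∈ I) :
    z ∈ closSpan {y : E | ∃ b : E, ∃ x ∈ I, y = b * x} := by
  refine closure_mono ?_ (mem_closure_range_mul_star_mul_self z)
  rintro _ ⟨c, rfl⟩
  exact Submodule.subset_span ⟨c, _, hz, rfl⟩

theorem mem_closSpan_mul_of_mul_star_self_mem {I : Set E} {z : E} (hz : z * star z ∈ I) :
    z ∈ closSpan {y : E | ∃ x ∈ I, ∃ b : E, y = x * b} := by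
  refine closure_mono ?_ (mem_closure_range_mul_star_self_mul z)
  rintro _ ⟨c, rfl⟩
  exact Submodule.subset_span ⟨_, hz, c, rfl⟩

namespace IsRestricted

variable {A I : Set E}

theorem subset (hI : IsRestricted A I) : I ⊆ A := by
  obtain ⟨J, -, rfl⟩ := hI
  exact Set.inter_subset_right

theorem mul_mul_mem (hI : IsRestricted A I) {a b x : E} (hx : x ∈ I) (h : a * x * b ∈ A) :
    a * x * b ∈ I := by
  obtain ⟨J, ⟨-, -, -, -, -, hJ⟩, rfl⟩ := hI
  exact ⟨(hJ _ (hJ x hx.1 a trivial).1 b trivial).2, h⟩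

theorem mul_normalizer_mem_closSpan (hI : IsRestricted A I) (hmul : ∀ x ∈ A, ∀ y ∈ A, x * y ∈ A)
    (hstar : ∀ x ∈ A, star x ∈ A) {x n : E} (hx : x ∈ I) (hn : IsNormalizer A n) :
    x * n ∈ closSpan {y : E | ∃ b : E, ∃ x ∈ I, y = b * x} := by
  have hA : star n * (star x * x) * n ∈ A :=
    hn.2 _ (hmul _ (hstar x (hI.subset hx)) x (hI.subset hx))
  have hz : star (x * n) * (x * n) = star n * star x * x * n := by
    simp only [star_mul, mul_assoc]
  apply mem_closSpan_mul_of_star_mul_self_mem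
  rw [hz]
  exact hI.mul_mul_mem hx (by rwa [mul_assoc (star n)])

theorem normalizer_mul_mem_closSpan (hI : IsRestricted A I) (hmul : ∀ x ∈ A, ∀ y ∈ A, x * y ∈ A)
    (hstar : ∀ x ∈ A, star x ∈ A) {x n : E} (hx : x ∈ I) (hn : IsNormalizer A n) :
    n * x ∈ closSpan {y : E | ∃ x ∈ I, ∃ b : E, y = x * b} := by
  have hA : n * (x * star x) * star n ∈ A :=
    hn.1 _ (hmul x (hI.subset hx) _ (hstar x (hI.subset hx)))
  have hz : n * x * star (n * x) = n * x * (star x * star n) := by rw [star_mul]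
  apply mem_closSpan_mul_of_mul_star_self_mem
  rw [hz]
  exact hI.mul_mul_mem hx (by simpa only [mul_assoc] using hA)

end IsRestricted

end KM

theorem stmt13_general {E : Type*} [NonUnitalCStarAlgebra E] (A : Set E)
    (hmul : ∀ x ∈ A, ∀ y ∈ A, x * y ∈ A) (hstar : ∀ x ∈ A, star x ∈ A)
    (hN : closSpan {b : E | IsNormalizer A b} = Set.univ) :
    SymmetricInclusion A := by
  intro I hI
  have hdense (b : E) : b ∈ closSpan {b : E | IsNormalizer A b} := hN ▸ Set.mem_univ b
  apply Set.Subset.antisymm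
  · refine closSpan_subset_closSpan ?_
    rintro _ ⟨x, hx, b, rfl⟩
    exact mapsTo_closSpan_s13 (ContinuousLinearMap.mul ℂ E x)
      (fun n hn ↦ hI.mul_normalizer_mem_closSpan hmul hstar hx hn) (hdense b)
  · refine closSpan_subset_closSpan ?_
    rintro _ ⟨b, x, hx, rfl⟩
    exact mapsTo_closSpan_s13 ((ContinuousLinearMap.mul ℂ E).flip x)
      (fun n hn ↦ hI.normalizer_mul_mem_closSpan hmul hstar hx hn) (hdense b)

/-- Every regular C*-inclusion is symmetric. -/
theorem stmt13 (A : Set B) (hA : IsSubCStar A) (hreg : RegularInclusion A) :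
    SymmetricInclusion A := by
  obtain ⟨-, -, -, -, hmul, hstar⟩ := hA
  exact stmt13_general A hmul hstar hreg.2
end

section
/- Let B be a C*-algebra and a ∈ B⁺ \ {0}. (1) Suppose there is b ∈ B⁺ \ {0} such that for every ε > 0 there are n, m ≥ 1 and elements a₁, …, a₍ₙ₊ₘ₎ ∈ aB with ‖a − Σ_{i=1}^{n} a_i* a_i‖ ≤ ε, ‖b − Σ_{i=n+1}^{n+m} a_i* a_i‖ ≤ ε, and Σ over all pairs i ≠ j of ‖a_i* a_j‖ ≤ ε. Then a is infinite in B. (2) If the same condition holds with b replaced by a (so both partial sums approximate a), then a is properly infinite in B. -/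
open KM

variable {B : Type*} [NonUnitalCStarAlgebra B] [PartialOrder B] [StarOrderedRing B]

/-! Put `x = ∑ aᵢ` over the first block of indices and `y = ∑ aᵢ` over the second; both lie in the
right ideal `aB`. Expanding products of sums, `x⋆x - ∑ aᵢ⋆aᵢ` and `x⋆y` are sums of cross terms
`aᵢ⋆aⱼ` with `i ≠ j`, and the norms of all cross terms together add up to at most `ε`. -/

section NonUnitalNonAssocSemiring

variable {ι R : Type*} [NonUnitalNonAssocSemiring R]

theorem sum_mul_sum_eq_sum_mul_add_sum_offDiag (s : Finset ι) (f g : ι → R) :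
    (∑ i ∈ s, f i) * ∑ j ∈ s, g j =
      ∑ i ∈ s, f i * g i + ∑ p ∈ s.offDiag, f p.1 * g p.2 := by
  classical
  rw [Finset.sum_mul_sum, ← Finset.sum_product', ← Finset.diag_union_offDiag,
    Finset.sum_union (Finset.disjoint_diag_offDiag s), Finset.sum_diag]

end NonUnitalNonAssocSemiring

theorem sum_sum_ite_eq_zero_eq_sum_offDiag {ι M : Type*} [DecidableEq ι] [AddCommMonoid M]
    (s : Finset ι) (g : ι → ι → M) :
    ∑ i ∈ s, ∑ j ∈ s, (if i = j then 0 else g i j) = ∑ p ∈ s.offDiag, g p.1 p.2 := by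
  rw [← Finset.sum_product', ← Finset.diag_union_offDiag,
    Finset.sum_union (Finset.disjoint_diag_offDiag s), Finset.sum_diag]
  simp only [if_true, Finset.sum_const_zero, zero_add]
  exact Finset.sum_congr rfl fun p hp => if_neg (Finset.mem_offDiag.1 hp).2.2

section NonUnitalSeminormedRing

variable {ι R : Type*} [NonUnitalSeminormedRing R]

theorem norm_sum_mul_sum_sub_sum_mul_le {s u : Finset ι} (hsu : s ⊆ u) (f g : ι → R) :
    ‖(∑ i ∈ s, f i) * ∑ j ∈ s, g j - ∑ i ∈ s, f i * g i‖ ≤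
      ∑ p ∈ u.offDiag, ‖f p.1 * g p.2‖ := by
  rw [sum_mul_sum_eq_sum_mul_add_sum_offDiag, add_sub_cancel_left]
  exact (norm_sum_le _ _).trans <| Finset.sum_le_sum_of_subset_of_nonneg
    (Finset.offDiag_mono hsu) fun _ _ _ => norm_nonneg _

theorem norm_sum_mul_sum_le_of_disjoint {s t u : Finset ι} (hst : Disjoint s t) (hsu : s ⊆ u)
    (htu : t ⊆ u) (f g : ι → R) :
    ‖(∑ i ∈ s, f i) * ∑ j ∈ t, g j‖ ≤ ∑ p ∈ u.offDiag, ‖f p.1 * g p.2‖ := by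
  have product_subset : s ×ˢ t ⊆ u.offDiag := fun p hp => by
    obtain ⟨hs, ht⟩ := Finset.mem_product.1 hp
    exact Finset.mem_offDiag.2 ⟨hsu hs, htu ht, Finset.disjoint_iff_ne.1 hst _ hs _ ht⟩
  rw [Finset.sum_mul_sum, ← Finset.sum_product']
  exact (norm_sum_le _ _).trans <| Finset.sum_le_sum_of_subset_of_nonneg
    product_subset fun _ _ _ => norm_nonneg _

variable [StarAddMonoid R]

theorem norm_star_sum_mul_sum_sub_le {s u : Finset ι} (hsu : s ⊆ u) {f : ι → R} {b : R} {ε δ : ℝ}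
    (hb : ‖b - ∑ i ∈ s, star (f i) * f i‖ ≤ ε)
    (hoff : ∑ p ∈ u.offDiag, ‖star (f p.1) * f p.2‖ ≤ δ) :
    ‖star (∑ i ∈ s, f i) * ∑ i ∈ s, f i - b‖ ≤ δ + ε := by
  rw [star_sum]
  rw [norm_sub_rev] at hb
  exact (norm_sub_le_norm_sub_add_norm_sub _ _ _).trans <| add_le_add
    ((norm_sum_mul_sum_sub_sum_mul_le hsu (fun i => star (f i)) f).trans hoff) hb

theorem exists_dvd_almost_orthogonal_of_disjoint {s t u : Finset ι} (hst : Disjoint s t)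
    (hsu : s ⊆ u) (htu : t ⊆ u) {f : ι → R} {a b c : R} {ε₁ ε₂ δ : ℝ} (hf : ∀ i ∈ u, a ∣ f i)
    (hb : ‖b - ∑ i ∈ s, star (f i) * f i‖ ≤ ε₁) (hc : ‖c - ∑ i ∈ t, star (f i) * f i‖ ≤ ε₂)
    (hoff : ∑ p ∈ u.offDiag, ‖star (f p.1) * f p.2‖ ≤ δ) :
    ∃ x y : R, a ∣ x ∧ a ∣ y ∧
      ‖star x * x - b‖ ≤ δ + ε₁ ∧ ‖star y * y - c‖ ≤ δ + ε₂ ∧ ‖star x * y‖ ≤ δ := by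
  refine ⟨∑ i ∈ s, f i, ∑ i ∈ t, f i, Finset.dvd_sum fun i hi => hf i (hsu hi),
    Finset.dvd_sum fun i hi => hf i (htu hi), norm_star_sum_mul_sum_sub_le hsu hb hoff,
    norm_star_sum_mul_sum_sub_le htu hc hoff, ?_⟩
  rw [star_sum]
  exact (norm_sum_mul_sum_le_of_disjoint hst hsu htu (fun i => star (f i)) f).trans hoff

theorem exists_dvd_almost_orthogonal_of_range_of_Ico {a b c : R} {ε : ℝ} {n m : ℕ} {f : ℕ → R}
    (hf : ∀ i < n + m, a ∣ f i)
    (hb : ‖b - ∑ i ∈ Finset.range n, star (f i) * f i‖ ≤ ε / 2)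
    (hc : ‖c - ∑ i ∈ Finset.Ico n (n + m), star (f i) * f i‖ ≤ ε / 2)
    (hoff : ∑ i ∈ Finset.range (n + m), ∑ j ∈ Finset.range (n + m),
      (if i = j then 0 else ‖star (f i) * f j‖) ≤ ε / 2) :
    ∃ x y : R, a ∣ x ∧ a ∣ y ∧
      ‖star x * x - b‖ ≤ ε ∧ ‖star y * y - c‖ ≤ ε ∧ ‖star x * y‖ ≤ ε := by
  have range_subset : Finset.range n ⊆ Finset.range (n + m) :=
    Finset.range_mono (Nat.le_add_right n m)
  have Ico_subset : Finset.Ico n (n + m) ⊆ Finset.range (n + m) := fun i hi =>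
    Finset.mem_range.2 (Finset.mem_Ico.1 hi).2
  have disjoint : Disjoint (Finset.range n) (Finset.Ico n (n + m)) := by
    rw [Finset.range_eq_Ico]
    exact Finset.Ico_disjoint_Ico_consecutive 0 n (n + m)
  rw [sum_sum_ite_eq_zero_eq_sum_offDiag] at hoff
  obtain ⟨x, y, hax, hay, hx, hy, hxy⟩ := exists_dvd_almost_orthogonal_of_disjoint disjoint
    range_subset Ico_subset (fun i hi => hf i (Finset.mem_range.1 hi)) hb hc hoff
  rw [add_halves] at hx hy
  have half_le : ε / 2 ≤ ε := by linarith [(norm_nonneg _).trans hxy]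
  exact ⟨x, y, hax, hay, hx, hy, hxy.trans half_le⟩

end NonUnitalSeminormedRing

/-- Sufficient conditions for infiniteness and proper infiniteness of a positive element
in terms of finite families `a_i ∈ aB` with almost orthogonal ranges. -/
theorem stmt15 (a : B) (ha : 0 ≤ a) (ha0 : a ≠ 0) :
    ((∃ b : B, 0 ≤ b ∧ b ≠ 0 ∧ ∀ ε : ℝ, 0 < ε → ∃ n m : ℕ, 1 ≤ n ∧ 1 ≤ m ∧
        ∃ f : ℕ → B, (∀ i < n + m, MemRightMul a (f i)) ∧
          ‖a - ∑ i ∈ Finset.range n, star (f i) * f i‖ ≤ ε ∧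
          ‖b - ∑ i ∈ Finset.Ico n (n + m), star (f i) * f i‖ ≤ ε ∧
          (∑ i ∈ Finset.range (n + m), ∑ j ∈ Finset.range (n + m),
            (if i = j then 0 else ‖star (f i) * f j‖)) ≤ ε) →
      InfiniteElt a) ∧
    ((∀ ε : ℝ, 0 < ε → ∃ n m : ℕ, 1 ≤ n ∧ 1 ≤ m ∧
        ∃ f : ℕ → B, (∀ i < n + m, MemRightMul a (f i)) ∧
          ‖a - ∑ i ∈ Finset.range n, star (f i) * f i‖ ≤ ε ∧
          ‖a - ∑ i ∈ Finset.Ico n (n + m), star (f i) * f i‖ ≤ ε ∧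
          (∑ i ∈ Finset.range (n + m), ∑ j ∈ Finset.range (n + m),
            (if i = j then 0 else ‖star (f i) * f j‖)) ≤ ε) →
      ProperlyInfinite a) := by
  -- `MemRightMul a x` unfolds to `a ∣ x`.
  refine ⟨fun ⟨b, hb, hb0, h⟩ => ⟨b, hb, hb0, fun ε hε => ?_⟩, fun h ε hε => ?_⟩
  · obtain ⟨n, m, -, -, f, hf, hfa, hfb, hoff⟩ := h (ε / 2) (half_pos hε)
    exact exists_dvd_almost_orthogonal_of_range_of_Ico hf hfa hfb hoff
  · obtain ⟨n, m, -, -, f, hf, hfa, hfa', hoff⟩ := h (ε / 2) (half_pos hε)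
    exact exists_dvd_almost_orthogonal_of_range_of_Ico hf hfa hfa' hoff
end

section
/- Let B be a C*-algebra, T an index set and (E_t)_{t∈T} a family of closed linear subspaces of B whose linear span is dense in B. Then an element a ∈ B⁺ \ {0} is properly infinite in B if and only if for every ε > 0 there are n, m ≥ 1, indices t₁, …, t₍ₙ₊ₘ₎ ∈ T and elements a_i ∈ a·E_{t_i} (for 1 ≤ i ≤ n+m) such that ‖a − Σ_{i,j=1}^{n} a_i* a_j‖ ≤ ε, ‖a − Σ_{i,j=n+1}^{n+m} a_i* a_j‖ ≤ ε, and ‖Σ_{i=1}^{n} Σ_{j=n+1}^{n+m} a_i* a_j‖ ≤ ε. -/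
open KM

variable {B : Type*} [NonUnitalCStarAlgebra B] [PartialOrder B] [StarOrderedRing B]


/-!
Since `∑ᵢ ∑ⱼ aᵢ* aⱼ = (∑ᵢ aᵢ)* (∑ⱼ aⱼ)`, the double sums only see the block sums
`x = a₁ + ⋯ + aₙ` and `y = aₙ₊₁ + ⋯ + aₙ₊ₘ`, and these range over pairs of elements of
`a · span (⋃ E t)`. By continuity, approximate solutions `x, y` in `aB` can be moved into that
subspace, at the cost of an arbitrarily small error.
-/

theorem exists_seq_append {α : Type*} (p q : ℕ → α) (n : ℕ) :
    ∃ r : ℕ → α, (∀ i < n, r i = p i) ∧ ∀ i, r (n + i) = q i :=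
  ⟨fun i => if i < n then p i else q (i - n), fun _ hi => if_pos hi, fun i => by simp⟩

theorem exists_seq_sum_range_sum_Ico {α M : Type*} [AddCommMonoid M] (g : α → M)
    (p q : ℕ → α) (n m : ℕ) :
    ∃ r : ℕ → α, ∑ i ∈ Finset.range n, g (r i) = ∑ i ∈ Finset.range n, g (p i) ∧
      ∑ i ∈ Finset.Ico n (n + m), g (r i) = ∑ i ∈ Finset.range m, g (q i) := by
  obtain ⟨r, hrp, hrq⟩ := exists_seq_append p q n
  refine ⟨r, Finset.sum_congr rfl fun i hi => by rw [hrp i (Finset.mem_range.1 hi)], ?_⟩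
  simp only [Finset.sum_Ico_eq_sum_range, Nat.add_sub_cancel_left, hrq]

section Span

variable {R M T : Type*} [Semiring R] [AddCommMonoid M] [Module R M]

theorem nonempty_of_dense_span_iUnion [TopologicalSpace M] [T1Space M] [Nontrivial M]
    {E : T → Submodule R M}
    (hE : Dense (Submodule.span R (⋃ t, (E t : Set M)) : Set M)) : Nonempty T := by
  by_contra hT
  rw [not_nonempty_iff] at hT
  obtain ⟨x, hx⟩ := exists_ne (0 : M)
  have hx_closure : x ∈ closure ({0} : Set M) := by simpa using hE x
  exact hx (by simpa using hx_closure)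

theorem exists_sum_range_eq_of_mem_span_iUnion [Nonempty T] (E : T → Submodule R M) {x : M}
    (hx : x ∈ Submodule.span R (⋃ t, (E t : Set M))) :
    ∃ n : ℕ, 1 ≤ n ∧ ∃ p : ℕ → Σ t, E t, ∑ i ∈ Finset.range n, ((p i).2 : M) = x := by
  rw [← Submodule.iSup_eq_span] at hx
  induction hx using Submodule.iSup_induction' with
  | mem t x hx => exact ⟨1, le_rfl, fun _ => ⟨t, x, hx⟩, by simp⟩
  | zero => exact ⟨1, le_rfl, fun _ => ⟨Classical.arbitrary T, 0⟩, by simp⟩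
  | add x y _ _ ihx ihy =>
    obtain ⟨n, hn, p, rfl⟩ := ihx
    obtain ⟨m, -, q, rfl⟩ := ihy
    obtain ⟨r, hrp, hrq⟩ := exists_seq_sum_range_sum_Ico (fun z : Σ t, E t => (z.2 : M)) p q n m
    exact ⟨n + m, by omega, r, by
      rw [← Finset.sum_range_add_sum_Ico _ (Nat.le_add_right n m), hrp, hrq]⟩

theorem exists_sum_range_sum_Ico_eq_of_mem_span_iUnion [Nonempty T] (E : T → Submodule R M)
    {x y : M} (hx : x ∈ Submodule.span R (⋃ t, (E t : Set M)))
    (hy : y ∈ Submodule.span R (⋃ t, (E t : Set M))) :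
    ∃ n m : ℕ, 1 ≤ n ∧ 1 ≤ m ∧ ∃ p : ℕ → Σ t, E t,
      ∑ i ∈ Finset.range n, ((p i).2 : M) = x ∧
        ∑ i ∈ Finset.Ico n (n + m), ((p i).2 : M) = y := by
  obtain ⟨n, hn, p, rfl⟩ := exists_sum_range_eq_of_mem_span_iUnion E hx
  obtain ⟨m, hm, q, rfl⟩ := exists_sum_range_eq_of_mem_span_iUnion E hy
  exact ⟨n, m, hn, hm, exists_seq_sum_range_sum_Ico (fun z : Σ t, E t => (z.2 : M)) p q n m⟩

end Span

theorem sum_sum_star_mul {A ι κ : Type*} [NonUnitalNonAssocSemiring A] [StarRing A]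
    (s : Finset ι) (u : Finset κ) (f : ι → A) (g : κ → A) :
    ∑ i ∈ s, ∑ j ∈ u, star (f i) * g j = star (∑ i ∈ s, f i) * ∑ j ∈ u, g j := by
  rw [star_sum, Finset.sum_mul_sum]

section OrthogonalRoots

variable {A : Type*} [NonUnitalSeminormedRing A] [Star A]

/-- How far `x` and `y` are from satisfying `x* x = y* y = a` and `x* y = 0`. The element `a` is
properly infinite when this defect is arbitrarily small on `aA × aA`. -/
def orthogonalRootDefect (a x y : A) : ℝ :=
  max ‖star x * x - a‖ (max ‖star y * y - a‖ ‖star x * y‖)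

theorem orthogonalRootDefect_le_iff {a x y : A} {ε : ℝ} :
    orthogonalRootDefect a x y ≤ ε ↔
      ‖star x * x - a‖ ≤ ε ∧ ‖star y * y - a‖ ≤ ε ∧ ‖star x * y‖ ≤ ε := by
  simp only [orthogonalRootDefect, max_le_iff]

theorem exists_mem_orthogonalRootDefect_mul_lt [ContinuousStar A] {D : Set A} (hD : Dense D)
    {a c d : A} {ε : ℝ} (h : orthogonalRootDefect a (a * c) (a * d) < ε) :
    ∃ c' ∈ D, ∃ d' ∈ D, orthogonalRootDefect a (a * c') (a * d') < ε := by
  have hcont : Continuous fun p : A × A => orthogonalRootDefect a (a * p.1) (a * p.2) := by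
    unfold orthogonalRootDefect
    fun_prop
  obtain ⟨⟨c', d'⟩, ⟨hc', hd'⟩, hlt⟩ :=
    (hD.prod hD).exists_mem_open (isOpen_lt hcont continuous_const) ⟨(c, d), h⟩
  exact ⟨c', hc', d', hd', hlt⟩

end OrthogonalRoots

theorem stmt16_general {A R T : Type*} [NonUnitalSeminormedRing A] [StarRing A]
    [ContinuousStar A] [Semiring R] [Module R A] [Nonempty T] (E : T → Submodule R A)
    (hdense : Dense (Submodule.span R (⋃ t, (E t : Set A)) : Set A)) (a : A) :
    (∀ ε : ℝ, 0 < ε → ∃ x y : A, (∃ c, x = a * c) ∧ (∃ d, y = a * d) ∧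
        ‖star x * x - a‖ ≤ ε ∧ ‖star y * y - a‖ ≤ ε ∧ ‖star x * y‖ ≤ ε) ↔
      ∀ ε : ℝ, 0 < ε → ∃ n m : ℕ, 1 ≤ n ∧ 1 ≤ m ∧ ∃ t : ℕ → T, ∃ f : ℕ → A,
        (∀ i < n + m, ∃ c ∈ E (t i), f i = a * c) ∧
        ‖a - ∑ i ∈ Finset.range n, ∑ j ∈ Finset.range n, star (f i) * f j‖ ≤ ε ∧
        ‖a - ∑ i ∈ Finset.Ico n (n + m), ∑ j ∈ Finset.Ico n (n + m),
            star (f i) * f j‖ ≤ ε ∧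
        ‖∑ i ∈ Finset.range n, ∑ j ∈ Finset.Ico n (n + m), star (f i) * f j‖ ≤ ε := by
  simp only [sum_sum_star_mul, norm_sub_rev a, ← orthogonalRootDefect_le_iff]
  constructor
  · intro h ε hε
    obtain ⟨_, _, ⟨c, rfl⟩, ⟨d, rfl⟩, hcd⟩ := h (ε / 2) (half_pos hε)
    obtain ⟨x, hx, y, hy, hxy⟩ :=
      exists_mem_orthogonalRootDefect_mul_lt hdense (hcd.trans_lt (half_lt_self hε))
    obtain ⟨n, m, hn, hm, p, rfl, rfl⟩ :=
      exists_sum_range_sum_Ico_eq_of_mem_span_iUnion E hx hy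
    refine ⟨n, m, hn, hm, fun i => (p i).1, fun i => a * (p i).2,
      fun i _ => ⟨(p i).2, (p i).2.2, rfl⟩, ?_⟩
    simpa only [Finset.mul_sum] using hxy.le
  · intro h ε hε
    obtain ⟨n, m, -, -, t, f, hf, hdefect⟩ := h ε hε
    have exists_sum_eq_mul (s : Finset ℕ) (hs : ∀ i ∈ s, i < n + m) :
        ∃ c, ∑ i ∈ s, f i = a * c := by
      choose! c _ hfc using hf
      exact ⟨∑ i ∈ s, c i, by
        rw [Finset.mul_sum]; exact Finset.sum_congr rfl fun i hi => hfc i (hs i hi)⟩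
    exact ⟨_, _, exists_sum_eq_mul _ fun i hi => by have := Finset.mem_range.1 hi; omega,
      exists_sum_eq_mul _ fun i hi => (Finset.mem_Ico.1 hi).2, hdefect⟩

/-- If `(E t)` is a family of closed subspaces of `B` with dense linear span, then a
nonzero positive `a` is properly infinite in `B` iff it satisfies the approximate
paradoxicality condition with elements from the subspaces `a·E t`. -/
theorem stmt16 {T : Type*} (E : T → Submodule ℂ B)
    (hclosed : ∀ t, IsClosed (E t : Set B))
    (hdense : Dense (↑(Submodule.span ℂ (⋃ t, (E t : Set B))) : Set B))
    (a : B) (ha : 0 ≤ a) (ha0 : a ≠ 0) :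
    ProperlyInfinite a ↔
      ∀ ε : ℝ, 0 < ε → ∃ n m : ℕ, 1 ≤ n ∧ 1 ≤ m ∧ ∃ t : ℕ → T, ∃ f : ℕ → B,
        (∀ i < n + m, ∃ c ∈ E (t i), f i = a * c) ∧
        ‖a - ∑ i ∈ Finset.range n, ∑ j ∈ Finset.range n, star (f i) * f j‖ ≤ ε ∧
        ‖a - ∑ i ∈ Finset.Ico n (n + m), ∑ j ∈ Finset.Ico n (n + m),
            star (f i) * f j‖ ≤ ε ∧
        ‖∑ i ∈ Finset.range n, ∑ j ∈ Finset.Ico n (n + m), star (f i) * f j‖ ≤ ε := by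
  have : Nontrivial B := ⟨a, 0, ha0⟩
  have : Nonempty T := nonempty_of_dense_span_iUnion hdense
  exact stmt16_general E hdense a
end

section
/- Let A ⊆ B be a regular C*-inclusion and let 𝒮(A,B) denote the set of all closed linear subspaces M of B such that A·M ⊆ M, M·A ⊆ M and every element of M is a normaliser of A. Define M·N as the closed linear span of {m n : m ∈ M, n ∈ N} and M* = {m* : m ∈ M}. Then 𝒮(A,B) is closed under these operations, the product is associative, A ∈ 𝒮(A,B), every M ∈ 𝒮(A,B) satisfies M·M*·M = M, and M* is the unique element X of 𝒮(A,B) with M·X·M = M and X·M·X = X (so 𝒮(A,B) is an inverse semigroup under these operations); moreover, the closed linear span of the union of all members of 𝒮(A,B) is B. -/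
open KM

variable {B : Type*} [NonUnitalCStarAlgebra B] [PartialOrder B] [StarOrderedRing B]

/-- `M` is a closed linear subspace of `B`. -/
def IsClosedSubspace (M : Set B) : Prop :=
  IsClosed M ∧ (0 : B) ∈ M ∧ (∀ x ∈ M, ∀ y ∈ M, x + y ∈ M) ∧
    ∀ (c : ℂ), ∀ x ∈ M, c • x ∈ M

/-- The product `M · N`: the closed linear span of `{m n : m ∈ M, n ∈ N}`. -/
def prodSet (M N : Set B) : Set B := closSpan {z : B | ∃ m ∈ M, ∃ n ∈ N, z = m * n}

/-- `M* = {m* : m ∈ M}`. -/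
def starSet (M : Set B) : Set B := {x : B | ∃ m ∈ M, x = star m}

/-- `𝒮(A, B)`: the set of all closed linear `A`-subbimodules of `B` consisting of
normalisers of `A`. -/
def SlashS (A : Set B) : Set (Set B) :=
  {M : Set B | IsClosedSubspace M ∧ (∀ a ∈ A, ∀ m ∈ M, a * m ∈ M) ∧
    (∀ m ∈ M, ∀ a ∈ A, m * a ∈ M) ∧ ∀ m ∈ M, IsNormalizer A m}

/-! The defining condition that every element of a bimodule `M` normalises `A` polarises to
`M · A · M* ⊆ A` and `M* · A · M ⊆ A`, so that membership in `𝒮(A, B)` becomes a list of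
inclusions between products and closure under products and adjoints is formal. Nondegeneracy says
that approximate units of `A` act as approximate units on all of `B`; hence
`M · M* ⊆ M · A · M* ⊆ A`, which makes `M · M*` a C*-algebra, and its approximate units give
`M · M* · M = M`. An idempotent `E` satisfies `E = E · E* · E ⊆ E*`, so it is self-adjoint. For a
generalised inverse `X` of `M` the idempotent `X · M` is therefore `M* · X*`, and
`X = M* · X* · X ⊆ M*`. Finally, a normaliser `b` lies in the member `A · {b} · A` of `𝒮(A, B)`.
-/

open Filter Topology
open scoped Pointwise

local notation:70 M:70 " ⬝ " N:71 => prodSet M N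

section Auxiliary

variable {R : Type*} [NonUnitalNormedRing R]

theorem isClosed_setOf_tendsto_mul_self {l : Filter R} {C : NNReal} (hl : ∀ᶠ e in l, ‖e‖ ≤ C) :
    IsClosed {b : R | Tendsto (fun e => e * b) l (𝓝 b)} := by
  let F : Metric.closedBall (0 : R) C → R → R := fun e b => e * b
  have hF : Equicontinuous F := by
    refine (LipschitzWith.uniformEquicontinuous F C fun e => ?_).equicontinuous
    refine .of_dist_le_mul fun x y => ?_
    rw [dist_eq_norm, dist_eq_norm, ← mul_sub]
    refine (norm_mul_le _ _).trans ?_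
    gcongr
    exact mem_closedBall_zero_iff.1 e.2
  have hball : Set.range ((↑) : Metric.closedBall (0 : R) C → R) ∈ l := by
    simpa [Metric.closedBall] using! hl
  simpa only [← tendsto_comap'_iff hball] using! hF.isClosed_setOfPred_tendsto continuous_id

variable [StarRing R] [CStarRing R]

theorem norm_mul_sub_self_sq_le {e : R} (he : IsSelfAdjoint e) (he₁ : ‖e‖ ≤ 1) (m : R) :
    ‖e * m - m‖ ^ 2 ≤ 2 * ‖e * (m * star m) - m * star m‖ := by
  set d := e * (m * star m) - m * star m with hd
  have h_square : (e * m - m) * star (e * m - m) = d * e - d := by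
    simp only [hd, star_sub, star_mul, he.star_eq]
    noncomm_ring
  calc ‖e * m - m‖ ^ 2 = ‖d * e - d‖ := by rw [sq, ← CStarRing.norm_self_mul_star, h_square]
    _ ≤ ‖d‖ * ‖e‖ + ‖d‖ := (norm_sub_le _ _).trans (by gcongr; exact norm_mul_le d e)
    _ ≤ 2 * ‖d‖ := by nlinarith [norm_nonneg d]

theorem tendsto_mul_self_of_tendsto_mul_star {l : Filter R} (hl : ∀ᶠ e in l, ‖e‖ ≤ 1)
    (hl_star : ∀ᶠ e in l, IsSelfAdjoint e) {m : R}
    (hm : Tendsto (fun e => e * (m * star m)) l (𝓝 (m * star m))) :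
    Tendsto (fun e => e * m) l (𝓝 m) := by
  rw [tendsto_iff_norm_sub_tendsto_zero] at hm ⊢
  have h_sqrt : Tendsto (fun e => √(2 * ‖e * (m * star m) - m * star m‖)) l (𝓝 0) := by
    simpa using (hm.const_mul 2).sqrt
  refine squeeze_zero' (.of_forall fun _ => norm_nonneg _) ?_ h_sqrt
  filter_upwards [hl, hl_star] with e he₁ he
  exact Real.le_sqrt_of_sq_le (norm_mul_sub_self_sq_le he he₁ m)

theorem sesquilinear_mem_of_forall_diag_mem {V W : Type*} [AddCommGroup V] [Module ℂ V]
    [AddCommGroup W] [Module ℂ W] (f : V →ₗ[ℂ] V →ₗ⋆[ℂ] W) {P : Submodule ℂ V} {Q : Submodule ℂ W}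
    (h : ∀ v ∈ P, f v v ∈ Q) {x y : V} (hx : x ∈ P) (hy : y ∈ P) : f x y ∈ Q := by
  have polarization : (4 : ℂ) • f x y = f (x + y) (x + y) - f (x - y) (x - y)
      + (Complex.I • f (x + Complex.I • y) (x + Complex.I • y)
        - Complex.I • f (x - Complex.I • y) (x - Complex.I • y)) := by
    simp only [map_add, map_sub, LinearMap.add_apply, LinearMap.sub_apply, map_smulₛₗ,
      LinearMap.smul_apply, smul_add, smul_sub, smul_smul, RingHom.id_apply, Complex.conj_I]
    match_scalars <;> grind [Complex.I_mul_I]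
  have hI : Complex.I • y ∈ P := P.smul_mem _ hy
  rw [← Q.smul_mem_iff (by norm_num : (4 : ℂ) ≠ 0), polarization]
  exact Q.add_mem (Q.sub_mem (h _ (P.add_mem hx hy)) (h _ (P.sub_mem hx hy)))
    (Q.sub_mem (Q.smul_mem _ (h _ (P.add_mem hx hI))) (Q.smul_mem _ (h _ (P.sub_mem hx hI))))

end Auxiliary

section ClosedSpan

omit [PartialOrder B] [StarOrderedRing B]

variable {S T Q M M' N N' : Set B}

theorem isClosedSubspace_coe {P : Submodule ℂ B} (hP : IsClosed (P : Set B)) :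
    IsClosedSubspace (P : Set B) :=
  ⟨hP, P.zero_mem, fun _ hx _ hy => P.add_mem hx hy, fun c _ hx => P.smul_mem c hx⟩

theorem IsClosedSubspace.exists_submodule (hQ : IsClosedSubspace Q) :
    ∃ P : Submodule ℂ B, IsClosed (P : Set B) ∧ (P : Set B) = Q :=
  ⟨{ carrier := Q
     zero_mem' := hQ.2.1
     add_mem' := fun hx hy => hQ.2.2.1 _ hx _ hy
     smul_mem' := fun c _ hx => hQ.2.2.2 c _ hx }, hQ.1, rfl⟩

theorem IsClosedSubspace.preimage {σ : ℂ →+* ℂ} (hQ : IsClosedSubspace Q) (f : B →SL[σ] B) :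
    IsClosedSubspace (f ⁻¹' Q) := by
  obtain ⟨P, hP, rfl⟩ := hQ.exists_submodule
  exact isClosedSubspace_coe (P := P.comap f.toLinearMap) (hP.preimage f.continuous)

protected theorem IsClosedSubspace.star (hQ : IsClosedSubspace Q) : IsClosedSubspace (star Q) :=
  hQ.preimage (starL ℂ : B ≃L⋆[ℂ] B).toContinuousLinearMap

theorem isClosedSubspace_closSpan (S : Set B) : IsClosedSubspace (closSpan S) :=
  isClosedSubspace_coe (Submodule.isClosed_topologicalClosure _)

theorem subset_closSpan (S : Set B) : S ⊆ closSpan S :=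
  Submodule.subset_span.trans subset_closure

theorem IsClosedSubspace.closSpan_subset_iff (hQ : IsClosedSubspace Q) :
    closSpan S ⊆ Q ↔ S ⊆ Q := by
  refine ⟨(subset_closSpan S).trans, fun h => ?_⟩
  obtain ⟨P, hP, rfl⟩ := hQ.exists_submodule
  exact closure_minimal (Submodule.span_le.2 h) hP

theorem closSpan_mono (h : S ⊆ T) : closSpan S ⊆ closSpan T :=
  (isClosedSubspace_closSpan T).closSpan_subset_iff.2 (h.trans (subset_closSpan T))

theorem mapsTo_closSpan {σ : ℂ →+* ℂ} (f : B →SL[σ] B) (hQ : IsClosedSubspace Q)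
    (h : Set.MapsTo f S Q) : Set.MapsTo f (closSpan S) Q :=
  (hQ.preimage f).closSpan_subset_iff.2 h

theorem closSpan_closSpan_mul (S T : Set B) : closSpan (closSpan S * T) = closSpan (S * T) := by
  refine Set.Subset.antisymm ?_ (closSpan_mono (Set.mul_subset_mul_right (subset_closSpan S)))
  rw [(isClosedSubspace_closSpan _).closSpan_subset_iff, Set.mul_subset_iff]
  intro x hx t ht
  exact mapsTo_closSpan ((ContinuousLinearMap.mul ℂ B).flip t) (isClosedSubspace_closSpan _)
    (fun s hs => subset_closSpan _ (Set.mul_mem_mul hs ht)) hx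

theorem closSpan_mul_closSpan (S T : Set B) : closSpan (S * closSpan T) = closSpan (S * T) := by
  refine Set.Subset.antisymm ?_ (closSpan_mono (Set.mul_subset_mul_left (subset_closSpan T)))
  rw [(isClosedSubspace_closSpan _).closSpan_subset_iff, Set.mul_subset_iff]
  intro s hs
  exact mapsTo_closSpan (ContinuousLinearMap.mul ℂ B s) (isClosedSubspace_closSpan _)
    (fun t ht => subset_closSpan _ (Set.mul_mem_mul hs ht))

theorem star_closSpan (S : Set B) : star (closSpan S) = closSpan (star S) := by
  refine Set.Subset.antisymm ?_ ?_
  · rw [Set.star_subset, (isClosedSubspace_closSpan _).star.closSpan_subset_iff, ← Set.star_subset]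
    exact subset_closSpan _
  · rw [(isClosedSubspace_closSpan S).star.closSpan_subset_iff, Set.star_subset_star]
    exact subset_closSpan S

theorem starSet_eq_star (M : Set B) : starSet M = star M := by
  ext x
  exact ⟨fun ⟨m, hm, hx⟩ => by simpa [hx] using hm, fun hx => ⟨star x, hx, (star_star x).symm⟩⟩

theorem prodSet_eq_closSpan_mul (M N : Set B) : M ⬝ N = closSpan (M * N) := by
  refine congrArg closSpan (Set.ext fun z => ?_)
  simp only [Set.mem_mul, Set.mem_ofPred_eq, eq_comm]

theorem isClosedSubspace_prodSet (M N : Set B) : IsClosedSubspace (M ⬝ N) :=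
  isClosedSubspace_closSpan _

theorem IsClosedSubspace.prodSet_subset_iff (hQ : IsClosedSubspace Q) :
    M ⬝ N ⊆ Q ↔ ∀ m ∈ M, ∀ n ∈ N, m * n ∈ Q := by
  rw [prodSet_eq_closSpan_mul, hQ.closSpan_subset_iff, Set.mul_subset_iff]

theorem IsClosedSubspace.prodSet_prodSet_subset_iff (hQ : IsClosedSubspace Q) :
    M ⬝ N ⬝ T ⊆ Q ↔ ∀ m ∈ M, ∀ n ∈ N, ∀ t ∈ T, m * n * t ∈ Q := by
  rw [prodSet_eq_closSpan_mul M, prodSet_eq_closSpan_mul, closSpan_closSpan_mul,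
    hQ.closSpan_subset_iff, Set.mul_subset_iff, ← Set.image2_mul, Set.forall_mem_image2]

theorem mul_mem_prodSet {m n : B} (hm : m ∈ M) (hn : n ∈ N) : m * n ∈ M ⬝ N :=
  (isClosedSubspace_prodSet M N).prodSet_subset_iff.1 subset_rfl m hm n hn

@[gcongr]
theorem prodSet_mono (hM : M ⊆ M') (hN : N ⊆ N') : M ⬝ N ⊆ M' ⬝ N' := by
  simpa only [prodSet_eq_closSpan_mul] using closSpan_mono (Set.mul_subset_mul hM hN)

theorem prodSet_assoc (M N P : Set B) : M ⬝ N ⬝ P = M ⬝ (N ⬝ P) := by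
  simp only [prodSet_eq_closSpan_mul, closSpan_closSpan_mul, closSpan_mul_closSpan, mul_assoc]

theorem star_prodSet (M N : Set B) : star (M ⬝ N) = star N ⬝ star M := by
  simp only [prodSet_eq_closSpan_mul, star_closSpan, Set.star_mul]

end ClosedSpan

section ApproximateUnit

omit [PartialOrder B] [StarOrderedRing B]

variable {A J M : Set B}

theorem isSubCStar_iff : IsSubCStar A ↔ IsClosedSubspace A ∧ A ⬝ A ⊆ A ∧ star A = A := by
  constructor
  · rintro ⟨hclosed, hzero, hadd, hsmul, hmul, hstar⟩
    have hA : IsClosedSubspace A := ⟨hclosed, hzero, hadd, hsmul⟩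
    refine ⟨hA, hA.prodSet_subset_iff.2 hmul, Set.Subset.antisymm (Set.star_subset.2 hstar) hstar⟩
  · rintro ⟨hA, hmul, hstar⟩
    exact ⟨hA.1, hA.2.1, hA.2.2.1, hA.2.2.2, hA.prodSet_subset_iff.1 hmul, hstar.ge⟩

namespace KM.IsSubCStar

theorem isClosedSubspace (hA : IsSubCStar A) : IsClosedSubspace A := (isSubCStar_iff.1 hA).1

theorem prodSet_self_subset (hA : IsSubCStar A) : A ⬝ A ⊆ A := (isSubCStar_iff.1 hA).2.1

theorem star_eq (hA : IsSubCStar A) : star A = A := (isSubCStar_iff.1 hA).2.2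

end KM.IsSubCStar

/-- The filter `l` is an approximate unit of the C*-subalgebra `J`, consisting of self-adjoint
contractions in `J`. Unlike for Mathlib's `Filter.IsIncreasingApproximateUnit`, the filter lives on
the ambient algebra, so that its action on elements outside `J` can be studied. -/
structure IsContractiveApproxUnit (J : Set B) (l : Filter B) : Prop where
  neBot : l.NeBot
  eventually_mem : ∀ᶠ e in l, e ∈ J
  eventually_norm_le_one : ∀ᶠ e in l, ‖e‖ ≤ 1
  eventually_isSelfAdjoint : ∀ᶠ e in l, IsSelfAdjoint e
  tendsto_mul : ∀ a ∈ J, Tendsto (fun e => e * a) l (𝓝 a)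

theorem KM.IsSubCStar.exists_isContractiveApproxUnit (hJ : IsSubCStar J) :
    ∃ l, IsContractiveApproxUnit J l := by
  obtain ⟨hclosed, hzero, hadd, hsmul, hmul, hstar⟩ := hJ
  let S : NonUnitalStarSubalgebra ℂ B :=
    { carrier := J
      add_mem' := fun hx hy => hadd _ hx _ hy
      zero_mem' := hzero
      mul_mem' := fun hx hy => hmul _ hx _ hy
      smul_mem' := fun c _ hx => hsmul c _ hx
      star_mem' := fun hx => hstar _ hx }
  have : IsClosed (S : Set B) := hclosed
  let := CStarAlgebra.spectralOrder S
  have := CStarAlgebra.spectralOrderedRing S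
  have hu := CStarAlgebra.increasingApproximateUnit S
  have := hu.neBot
  refine ⟨(CStarAlgebra.approximateUnit S).map Subtype.val, inferInstance,
    eventually_map.2 (.of_forall Subtype.property), eventually_map.2 hu.eventually_norm,
    eventually_map.2 (hu.eventually_isSelfAdjoint.mono fun e he => congrArg Subtype.val he),
    fun a ha => tendsto_map'_iff.2 ?_⟩
  exact (continuous_subtype_val.tendsto _).comp (hu.tendsto_mul_right (⟨a, ha⟩ : S))

namespace IsContractiveApproxUnit

variable {l : Filter B}

theorem isClosedSubspace_setOf_tendsto (hl : IsContractiveApproxUnit J l) :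
    IsClosedSubspace {b : B | Tendsto (fun e => e * b) l (𝓝 b)} := by
  refine ⟨isClosed_setOf_tendsto_mul_self (C := 1) hl.eventually_norm_le_one, ?_,
    fun x hx y hy => ?_, fun c x hx => ?_⟩
  · simpa using tendsto_const_nhds
  · simpa [mul_add] using Tendsto.add hx hy
  · simpa [mul_smul_comm] using Tendsto.const_smul hx c

theorem tendsto_mul_of_nondegenerate (hl : IsContractiveApproxUnit A l) (hnd : Nondegenerate A)
    (b : B) : Tendsto (fun e => e * b) l (𝓝 b) := by
  refine hl.isClosedSubspace_setOf_tendsto.closSpan_subset_iff.2 ?_ (hnd.ge (Set.mem_univ b))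
  rintro _ ⟨a, ha, c, rfl⟩
  simpa [mul_assoc] using (hl.tendsto_mul a ha).mul_const c

theorem mem_prodSet (hl : IsContractiveApproxUnit J l) {b : B}
    (hb : Tendsto (fun e => e * b) l (𝓝 b)) (hbM : b ∈ M) : b ∈ J ⬝ M := by
  have := hl.neBot
  exact (isClosedSubspace_prodSet J M).1.mem_of_tendsto hb
    (hl.eventually_mem.mono fun e he => mul_mem_prodSet he hbM)

end IsContractiveApproxUnit

theorem subset_prodSet_of_nondegenerate (hA : IsSubCStar A) (hnd : Nondegenerate A) (M : Set B) :
    M ⊆ A ⬝ M := by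
  obtain ⟨l, hl⟩ := hA.exists_isContractiveApproxUnit
  exact fun m hm => hl.mem_prodSet (hl.tendsto_mul_of_nondegenerate hnd m) hm

theorem subset_prodSet_right_of_nondegenerate (hA : IsSubCStar A) (hnd : Nondegenerate A)
    (M : Set B) : M ⊆ M ⬝ A := by
  have h := subset_prodSet_of_nondegenerate hA hnd (star M)
  rwa [Set.star_subset, star_prodSet, star_star, hA.star_eq] at h

theorem subset_prodSet_star_prodSet (hM : IsSubCStar (M ⬝ star M)) : M ⊆ M ⬝ star M ⬝ M := by
  obtain ⟨l, hl⟩ := hM.exists_isContractiveApproxUnit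
  intro m hm
  have hmm : m * star m ∈ M ⬝ star M := mul_mem_prodSet hm (Set.star_mem_star.2 hm)
  exact hl.mem_prodSet (tendsto_mul_self_of_tendsto_mul_star hl.eventually_norm_le_one
    hl.eventually_isSelfAdjoint (hl.tendsto_mul _ hmm)) hm

end ApproximateUnit

section Normalizes

omit [PartialOrder B] [StarOrderedRing B]

variable {A M N : Set B}

/-- The set `M` normalises `A` jointly: `x a y*` and `x* a y` lie in `A` for all `x, y ∈ M` and
`a ∈ A`. For closed subspaces this is the polarised form of `IsNormalizer`. -/
def Normalizes (A M : Set B) : Prop := M ⬝ A ⬝ star M ⊆ A ∧ star M ⬝ A ⬝ M ⊆ A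

protected theorem Normalizes.star (h : Normalizes A M) : Normalizes A (star M) := by
  simpa only [Normalizes, star_star] using h.symm

protected theorem Normalizes.prodSet (hM : Normalizes A M) (hN : Normalizes A N) :
    Normalizes A (M ⬝ N) := by
  rw [Normalizes, star_prodSet]
  constructor
  · calc M ⬝ N ⬝ A ⬝ (star N ⬝ star M)
      _ = M ⬝ (N ⬝ A ⬝ star N) ⬝ star M := by simp only [prodSet_assoc]
      _ ⊆ M ⬝ A ⬝ star M := by gcongr; exact hN.1
      _ ⊆ A := hM.1
  · calc star N ⬝ star M ⬝ A ⬝ (M ⬝ N)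
      _ = star N ⬝ (star M ⬝ A ⬝ M) ⬝ N := by simp only [prodSet_assoc]
      _ ⊆ star N ⬝ A ⬝ N := by gcongr; exact hM.2
      _ ⊆ A := hN.2

theorem normalizes_self (hA : IsSubCStar A) : Normalizes A A := by
  have h : A ⬝ A ⬝ A ⊆ A := (prodSet_mono hA.prodSet_self_subset subset_rfl).trans
    hA.prodSet_self_subset
  rw [Normalizes, hA.star_eq]
  exact ⟨h, h⟩

protected theorem KM.IsNormalizer.star {b : B} (hb : IsNormalizer A b) :
    IsNormalizer A (star b) := by
  simpa only [IsNormalizer, star_star] using hb.symm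

theorem normalizes_singleton (hA : IsClosedSubspace A) {b : B} (hb : IsNormalizer A b) :
    Normalizes A {b} := by
  simpa only [Normalizes, Set.star_singleton, hA.prodSet_prodSet_subset_iff,
    Set.mem_singleton_iff, forall_eq] using! hb

theorem prodSet_prodSet_star_subset_of_isNormalizer (hA : IsClosedSubspace A)
    (hM : IsClosedSubspace M) (h : ∀ m ∈ M, IsNormalizer A m) : M ⬝ A ⬝ star M ⊆ A := by
  rw [hA.prodSet_prodSet_subset_iff]
  intro x hx a ha y hy
  obtain ⟨P, -, rfl⟩ := hM.exists_submodule
  obtain ⟨Q, -, rfl⟩ := hA.exists_submodule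
  let f : B →ₗ[ℂ] B →ₗ⋆[ℂ] B := LinearMap.mk₂'ₛₗ (.id ℂ) (starRingEnd ℂ)
    (fun x y => x * a * star y) (by simp [add_mul]) (by simp [smul_mul_assoc])
    (by simp [mul_add]) (by simp [mul_smul_comm])
  have h_diag : ∀ m ∈ P, f m m ∈ Q := fun m hm => (h m hm).1 a ha
  simpa [f] using sesquilinear_mem_of_forall_diag_mem f h_diag hx hy

theorem normalizes_iff_forall_isNormalizer (hA : IsClosedSubspace A) (hM : IsClosedSubspace M) :
    Normalizes A M ↔ ∀ m ∈ M, IsNormalizer A m := by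
  refine ⟨fun h m hm => ?_, fun h => ⟨prodSet_prodSet_star_subset_of_isNormalizer hA hM h, ?_⟩⟩
  · have hm' : star m ∈ star M := Set.star_mem_star.2 hm
    exact ⟨fun a ha => hA.prodSet_prodSet_subset_iff.1 h.1 m hm a ha _ hm',
      fun a ha => hA.prodSet_prodSet_subset_iff.1 h.2 _ hm' a ha m hm⟩
  · have h_star : ∀ m ∈ star M, IsNormalizer A m := fun m hm => by simpa using (h _ hm).star
    simpa only [star_star] using prodSet_prodSet_star_subset_of_isNormalizer hA hM.star h_star

end Normalizes

section SlashS

omit [PartialOrder B] [StarOrderedRing B]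

variable {A E M N X : Set B}

theorem mem_slashS_iff (hA : IsClosedSubspace A) :
    M ∈ SlashS A ↔ IsClosedSubspace M ∧ A ⬝ M ⊆ M ∧ M ⬝ A ⊆ M ∧ Normalizes A M := by
  refine and_congr_right fun hM => ?_
  rw [hM.prodSet_subset_iff, hM.prodSet_subset_iff, normalizes_iff_forall_isNormalizer hA hM]

theorem prodSet_subset_of_subset_left (hM : M ∈ SlashS A) (hN : N ⊆ A) : N ⬝ M ⊆ M :=
  hM.1.prodSet_subset_iff.2 fun n hn m hm => hM.2.1 n (hN hn) m hm

theorem prodSet_subset_of_subset_right (hM : M ∈ SlashS A) (hN : N ⊆ A) : M ⬝ N ⊆ M :=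
  hM.1.prodSet_subset_iff.2 fun m hm n hn => hM.2.2.1 m hm n (hN hn)

theorem self_mem_slashS (hA : IsSubCStar A) : A ∈ SlashS A :=
  (mem_slashS_iff hA.isClosedSubspace).2
    ⟨hA.isClosedSubspace, hA.prodSet_self_subset, hA.prodSet_self_subset, normalizes_self hA⟩

theorem prodSet_mem_slashS (hA : IsClosedSubspace A) (hM : M ∈ SlashS A) (hN : N ∈ SlashS A) :
    M ⬝ N ∈ SlashS A := by
  rw [mem_slashS_iff hA] at hM hN ⊢
  obtain ⟨-, hAM, -, hnM⟩ := hM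
  obtain ⟨-, -, hNA, hnN⟩ := hN
  refine ⟨isClosedSubspace_prodSet M N, ?_, ?_, hnM.prodSet hnN⟩
  · exact (prodSet_assoc A M N).ge.trans (prodSet_mono hAM subset_rfl)
  · exact (prodSet_assoc M N A).le.trans (prodSet_mono subset_rfl hNA)

theorem star_mem_slashS (hA : IsSubCStar A) (hM : M ∈ SlashS A) : star M ∈ SlashS A := by
  rw [mem_slashS_iff hA.isClosedSubspace] at hM ⊢
  obtain ⟨hsub, hAM, hMA, hn⟩ := hM
  refine ⟨hsub.star, ?_, ?_, hn.star⟩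
  · rwa [← Set.star_subset_star, star_prodSet, star_star, hA.star_eq]
  · rwa [← Set.star_subset_star, star_prodSet, star_star, hA.star_eq]

theorem prodSet_star_subset (hA : IsSubCStar A) (hnd : Nondegenerate A) (hM : M ∈ SlashS A) :
    M ⬝ star M ⊆ A := by
  have hn := ((mem_slashS_iff hA.isClosedSubspace).1 hM).2.2.2
  exact (prodSet_mono (subset_prodSet_right_of_nondegenerate hA hnd M) subset_rfl).trans hn.1

theorem star_prodSet_subset (hA : IsSubCStar A) (hnd : Nondegenerate A) (hM : M ∈ SlashS A) :
    star M ⬝ M ⊆ A := by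
  simpa only [star_star] using prodSet_star_subset hA hnd (star_mem_slashS hA hM)

theorem isSubCStar_prodSet_star (hA : IsSubCStar A) (hnd : Nondegenerate A) (hM : M ∈ SlashS A) :
    IsSubCStar (M ⬝ star M) := by
  have hMM := prodSet_mem_slashS hA.isClosedSubspace hM (star_mem_slashS hA hM)
  refine isSubCStar_iff.2 ⟨hMM.1, ?_, by rw [star_prodSet, star_star]⟩
  exact prodSet_subset_of_subset_left hMM (prodSet_star_subset hA hnd hM)

theorem prodSet_star_prodSet_self (hA : IsSubCStar A) (hnd : Nondegenerate A)
    (hM : M ∈ SlashS A) : M ⬝ star M ⬝ M = M :=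
  (prodSet_subset_of_subset_left hM (prodSet_star_subset hA hnd hM)).antisymm
    (subset_prodSet_star_prodSet (isSubCStar_prodSet_star hA hnd hM))

theorem star_eq_of_prodSet_self_eq (hA : IsSubCStar A) (hnd : Nondegenerate A)
    (hE : E ∈ SlashS A) (hEE : E ⬝ E = E) : star E = E := by
  have hE' := star_mem_slashS hA hE
  have hEE' : star E ⬝ star E = star E := by rw [← star_prodSet, hEE]
  have h_range : E ⬝ star E ⊆ star E := by
    calc E ⬝ star E = E ⬝ star E ⬝ star E := by rw [prodSet_assoc, hEE']
      _ ⊆ star E := prodSet_subset_of_subset_left hE' (prodSet_star_subset hA hnd hE)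
  have h_source : star E ⬝ E ⊆ star E := by
    calc star E ⬝ E = star E ⬝ (star E ⬝ E) := by rw [← prodSet_assoc, hEE']
      _ ⊆ star E := prodSet_subset_of_subset_right hE' (star_prodSet_subset hA hnd hE)
  have hsub : E ⊆ star E := by
    calc E = E ⬝ star E ⬝ E := (prodSet_star_prodSet_self hA hnd hE).symm
      _ ⊆ star E ⬝ E := by gcongr
      _ ⊆ star E := h_source
  exact (Set.star_subset.2 hsub).antisymm hsub

theorem subset_star_of_prodSet_prodSet_eq (hA : IsSubCStar A) (hnd : Nondegenerate A)
    (hM : M ∈ SlashS A) (hX : X ∈ SlashS A) (hXMX : X ⬝ M ⬝ X = X) : X ⊆ star M := by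
  have h_idem : X ⬝ M ⬝ (X ⬝ M) = X ⬝ M := by rw [← prodSet_assoc, hXMX]
  have h_star : star (X ⬝ M) = X ⬝ M := star_eq_of_prodSet_self_eq hA hnd
    (prodSet_mem_slashS hA.isClosedSubspace hX hM) h_idem
  calc X = star (X ⬝ M) ⬝ X := by rw [h_star, hXMX]
    _ = star M ⬝ (star X ⬝ X) := by rw [star_prodSet, prodSet_assoc]
    _ ⊆ star M := prodSet_subset_of_subset_right (star_mem_slashS hA hM)
        (star_prodSet_subset hA hnd hX)

theorem eq_star_of_prodSet_prodSet_eq (hA : IsSubCStar A) (hnd : Nondegenerate A)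
    (hM : M ∈ SlashS A) (hX : X ∈ SlashS A) (hMXM : M ⬝ X ⬝ M = M) (hXMX : X ⬝ M ⬝ X = X) :
    X = star M :=
  (subset_star_of_prodSet_prodSet_eq hA hnd hM hX hXMX).antisymm
    (Set.star_subset.2 (subset_star_of_prodSet_prodSet_eq hA hnd hX hM hMXM))

theorem prodSet_singleton_prodSet_mem_slashS (hA : IsSubCStar A) {b : B} (hb : IsNormalizer A b) :
    A ⬝ {b} ⬝ A ∈ SlashS A := by
  have hn := normalizes_self hA
  rw [mem_slashS_iff hA.isClosedSubspace]
  refine ⟨isClosedSubspace_prodSet _ _, ?_, ?_,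
    (hn.prodSet (normalizes_singleton hA.isClosedSubspace hb)).prodSet hn⟩
  · calc A ⬝ (A ⬝ {b} ⬝ A) = A ⬝ A ⬝ {b} ⬝ A := by simp only [prodSet_assoc]
      _ ⊆ A ⬝ {b} ⬝ A := by gcongr; exact hA.prodSet_self_subset
  · calc A ⬝ {b} ⬝ A ⬝ A = A ⬝ {b} ⬝ (A ⬝ A) := prodSet_assoc _ _ _
      _ ⊆ A ⬝ {b} ⬝ A := by gcongr; exact hA.prodSet_self_subset

theorem mem_sUnion_slashS_of_isNormalizer (hA : IsSubCStar A) (hnd : Nondegenerate A) {b : B}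
    (hb : IsNormalizer A b) : b ∈ ⋃₀ SlashS A := by
  refine ⟨A ⬝ {b} ⬝ A, prodSet_singleton_prodSet_mem_slashS hA hb, ?_⟩
  exact subset_prodSet_right_of_nondegenerate hA hnd _
    (subset_prodSet_of_nondegenerate hA hnd {b} rfl)

end SlashS

/-- For a regular C*-inclusion `A ⊆ B`, the collection `𝒮(A, B)` of closed linear
`A`-subbimodules consisting of normalisers is an inverse semigroup under `M · N` and
`M ↦ M*`, with unit `A`, and the closed linear span of its union is `B`. -/
theorem stmt18 (A : Set B) (hA : IsSubCStar A) (hreg : RegularInclusion A) :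
    (∀ M ∈ SlashS A, ∀ N ∈ SlashS A, prodSet M N ∈ SlashS A) ∧
    (∀ M ∈ SlashS A, starSet M ∈ SlashS A) ∧
    (∀ M ∈ SlashS A, ∀ N ∈ SlashS A, ∀ P ∈ SlashS A,
      prodSet (prodSet M N) P = prodSet M (prodSet N P)) ∧
    (A ∈ SlashS A) ∧
    (∀ M ∈ SlashS A, prodSet (prodSet M (starSet M)) M = M) ∧
    (∀ M ∈ SlashS A, ∀ X ∈ SlashS A,
      prodSet (prodSet M X) M = M → prodSet (prodSet X M) X = X → X = starSet M) ∧
    closSpan (⋃₀ SlashS A) = Set.univ := by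
  have hnd := hreg.1
  simp only [starSet_eq_star]
  refine ⟨fun M hM N hN => prodSet_mem_slashS hA.isClosedSubspace hM hN,
    fun M hM => star_mem_slashS hA hM, fun M _ N _ P _ => prodSet_assoc M N P,
    self_mem_slashS hA, fun M hM => prodSet_star_prodSet_self hA hnd hM,
    fun M hM X hX => eq_star_of_prodSet_prodSet_eq hA hnd hM hX, ?_⟩
  have h_span : closSpan {b : B | IsNormalizer A b} ⊆ closSpan (⋃₀ SlashS A) :=
    closSpan_mono fun b hb => mem_sUnion_slashS_of_isNormalizer hA hnd hb
  rwa [hreg.2, Set.univ_subset_iff] at h_span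
end
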